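/- Let ω be a germ of symplectic form on ℝ^{2n} (a smooth 2-form defined near 0 with dω = 0 near 0 and ω(x) a non-degenerate bilinear form for every x near 0). Let f_1, f_2 : (ℝ,0)→(ℝ^{2n},0) be quasi-homogeneous curve-germs, i.e. each is A-equivalent to a monomial curve t↦(t^{μ_1},…,t^{μ_k},0,…,0) for some positive integers μ_1<…<μ_k linearly independent over non-negative integers. Then the following are equivalent: (a) f_1 and f_2 are symplectomorphic in (ℝ^{2n},ω), i.e. there exist a germ of diffeomorphism φ:(ℝ,0)→(ℝ,0) and a germ of diffeomorphism Φ:(ℝ^{2n},0)→(ℝ^{2n},0) with Φ^*ω = ω near 0 and Φ∘f_1 = f_2∘φ near 0; (b) the algebraic restrictions [ω]_{f_1} and [ω]_{f_2} are diffeomorphic, i.e. there exist germs of diffeomorphisms Θ:(ℝ^{2n},0)→(ℝ^{2n},0) and ψ:(ℝ,0)→(ℝ,0) with Θ∘f_1 = f_2∘ψ near 0 such that Θ^*ω and ω have the same algebraic restriction to f_1. -/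

import Mathlib

open Filter Topology

noncomputable section

/-- A (set-theoretic) differential 1-form on `ℝ^m`: a map assigning to each point a
function on tangent vectors. -/
def Form1 (m : ℕ) := (Fin m → ℝ) → (Fin m → ℝ) → ℝ

/-- A (set-theoretic) differential 2-form on `ℝ^m`. -/
def Form2 (m : ℕ) := (Fin m → ℝ) → (Fin m → ℝ) → (Fin m → ℝ) → ℝ

/-- A germ at `0` of a smooth differential 1-form: pointwise linear in the tangent
vector, and with coefficients smooth on a neighbourhood of `0`. -/
def IsForm1 (m : ℕ) (β : Form1 m) : Prop :=
  (∀ x u₁ u₂ (c : ℝ), β x (u₁ + c • u₂) = β x u₁ + c * β x u₂) ∧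
  (∀ u, ∃ U ∈ 𝓝 (0 : Fin m → ℝ), ContDiffOn ℝ (⊤ : ℕ∞) (fun x => β x u) U)

/-- A germ at `0` of a smooth differential 2-form: pointwise bilinear and alternating
in the tangent vectors, with coefficients smooth on a neighbourhood of `0`. -/
def IsForm2 (m : ℕ) (ω : Form2 m) : Prop :=
  (∀ x u₁ u₂ v (c : ℝ), ω x (u₁ + c • u₂) v = ω x u₁ v + c * ω x u₂ v) ∧
  (∀ x u v, ω x u v = - ω x v u) ∧
  (∀ u v, ∃ U ∈ 𝓝 (0 : Fin m → ℝ), ContDiffOn ℝ (⊤ : ℕ∞) (fun x => ω x u v) U)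

/-- The exterior derivative of a 1-form, evaluated on a pair of (constant) vectors. -/
def extD1 (m : ℕ) (β : Form1 m) : Form2 m :=
  fun x u v => fderiv ℝ (fun y => β y v) x u - fderiv ℝ (fun y => β y u) x v

/-- The exterior derivative of a 2-form, evaluated on a triple of (constant) vectors. -/
def extD2 (m : ℕ) (ω : Form2 m) (x u v w : Fin m → ℝ) : ℝ :=
  fderiv ℝ (fun y => ω y v w) x u - fderiv ℝ (fun y => ω y u w) x v
    + fderiv ℝ (fun y => ω y u v) x w

/-- A 2-form is closed near `0` if its exterior derivative vanishes near `0`. -/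
def Closed2 (m : ℕ) (ω : Form2 m) : Prop :=
  ∀ᶠ x in 𝓝 (0 : Fin m → ℝ), ∀ u v w, extD2 m ω x u v w = 0

/-- A 1-form vanishes on the image of a curve-germ. -/
def VanishesOn1 (m : ℕ) (β : Form1 m) (f : ℝ → (Fin m → ℝ)) : Prop :=
  ∀ᶠ t in 𝓝 (0 : ℝ), ∀ u, β (f t) u = 0

/-- A 2-form vanishes on the image of a curve-germ. -/
def VanishesOn2 (m : ℕ) (ω : Form2 m) (f : ℝ → (Fin m → ℝ)) : Prop :=
  ∀ᶠ t in 𝓝 (0 : ℝ), ∀ u v, ω (f t) u v = 0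

/-- A 2-form `ω` has zero algebraic restriction to the curve-germ `f` if `ω = α + dβ`
near `0` for a smooth 2-form `α` and a smooth 1-form `β` both vanishing on `im f`. -/
def ZeroAR2 (m : ℕ) (ω : Form2 m) (f : ℝ → (Fin m → ℝ)) : Prop :=
  ∃ (α : Form2 m) (β : Form1 m), IsForm2 m α ∧ IsForm1 m β ∧
    VanishesOn2 m α f ∧ VanishesOn1 m β f ∧
    ∀ᶠ x in 𝓝 (0 : Fin m → ℝ), ∀ u v, ω x u v = α x u v + extD1 m β x u v

/-- Two 2-forms have the same algebraic restriction to `f` if their difference has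
zero algebraic restriction to `f`. -/
def SameAR2 (m : ℕ) (ω₁ ω₂ : Form2 m) (f : ℝ → (Fin m → ℝ)) : Prop :=
  ZeroAR2 m (fun x u v => ω₁ x u v - ω₂ x u v) f

/-- The pullback of a 2-form by a (germ of) smooth map. -/
def pull2 (m : ℕ) (Φ : (Fin m → ℝ) → (Fin m → ℝ)) (ω : Form2 m) : Form2 m :=
  fun x u v => ω (Φ x) (fderiv ℝ Φ x u) (fderiv ℝ Φ x v)

/-- A germ of diffeomorphism of `(ℝ,0)`. -/
def IsDiffeoGerm1 (φ : ℝ → ℝ) : Prop :=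
  φ 0 = 0 ∧ (∃ U ∈ 𝓝 (0 : ℝ), ContDiffOn ℝ (⊤ : ℕ∞) φ U) ∧ deriv φ 0 ≠ 0

/-- A germ of diffeomorphism of `(ℝ^m,0)`. -/
def IsDiffeoGerm (m : ℕ) (Φ : (Fin m → ℝ) → (Fin m → ℝ)) : Prop :=
  Φ 0 = 0 ∧ (∃ U ∈ 𝓝 (0 : Fin m → ℝ), ContDiffOn ℝ (⊤ : ℕ∞) Φ U) ∧
    ∃ D : (Fin m → ℝ) ≃L[ℝ] (Fin m → ℝ),
      HasFDerivAt Φ (D : (Fin m → ℝ) →L[ℝ] (Fin m → ℝ)) 0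

/-- The constant 2-form `dxᵢ ∧ dxⱼ` on `ℝ^m` (indices `0`-based). -/
def wedge (m : ℕ) (i j : Fin m) : Form2 m := fun _ u v => u i * v j - u j * v i

/-- The 2-form `x_l · dxᵢ ∧ dxⱼ` on `ℝ^m` (indices `0`-based). -/
def mwedge (m : ℕ) (l i j : Fin m) : Form2 m :=
  fun x u v => x l * (u i * v j - u j * v i)

/-- A curve-germ: a `C^∞` map from a neighbourhood of `0` in `ℝ` to `ℝ^m` sending `0` to `0`. -/
def IsCurveGerm (m : ℕ) (f : ℝ → (Fin m → ℝ)) : Prop :=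
  f 0 = 0 ∧ ∃ U ∈ 𝓝 (0 : ℝ), ContDiffOn ℝ (⊤ : ℕ∞) f U

/-- `A`-equivalence of curve-germs. -/
def AEquiv (m : ℕ) (f g : ℝ → (Fin m → ℝ)) : Prop :=
  ∃ φ Φ, IsDiffeoGerm1 φ ∧ IsDiffeoGerm m Φ ∧ ∀ᶠ t in 𝓝 (0 : ℝ), Φ (f t) = g (φ t)

/-- Positive integers `μ 0, …, μ (k-1)` are linearly independent over non-negative
integers: no `μ j` is a `ℕ`-linear combination of the others. -/
def LinIndepNonneg {k : ℕ} (μ : Fin k → ℕ) : Prop :=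
  ∀ j : Fin k, ∀ c : Fin k → ℕ, μ j ≠ ∑ i ∈ Finset.univ.erase j, c i * μ i

/-- A quasi-homogeneous curve-germ: one `A`-equivalent to a monomial curve
`t ↦ (t^{μ₁},…,t^{μ_k},0,…,0)` with `μ₁ < … < μ_k` positive and linearly independent
over non-negative integers. -/
def IsQuasiHomogeneousCurve (m : ℕ) (f : ℝ → (Fin m → ℝ)) : Prop :=
  ∃ k : ℕ, 1 ≤ k ∧ k ≤ m ∧ ∃ μ : Fin k → ℕ,
    StrictMono μ ∧ (∀ i, 0 < μ i) ∧ LinIndepNonneg μ ∧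
    AEquiv m f (fun t i => if h : (i : ℕ) < k then t ^ μ ⟨i, h⟩ else 0)

/-- A germ of symplectic form on `ℝ^m`: a smooth 2-form, closed near `0`, and
pointwise non-degenerate near `0`. -/
def IsSymplecticGerm (m : ℕ) (ω : Form2 m) : Prop :=
  IsForm2 m ω ∧ Closed2 m ω ∧
    ∀ᶠ x in 𝓝 (0 : Fin m → ℝ), ∀ u, (∀ v, ω x u v = 0) → u = 0

/-!
If `Φ` is a symplectomorphism with `Φ ∘ f₁ = f₂ ∘ φ`, then `Φ^*ω = ω` and (b) holds with `Θ = Φ`.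
For the converse it suffices to find a diffeomorphism germ `Ψ` that fixes the curve `f₁` pointwise
and satisfies `Ψ^*Θ^*ω = ω`, and one may assume that `f₁` is the monomial curve
`t ↦ (t^{μ₁}, …, t^{μ_k}, 0, …, 0)`.

By assumption `Θ^*ω - ω = α + dβ` with `α` and `β` vanishing on the curve. The form `α` is closed,
and the quasi-homogeneous dilations preserve the curve, so the Poincaré lemma for this contraction
gives `α = dκ` with `κ` vanishing on the curve. Thus `Θ^*ω - ω = dη` where `η = κ + β` vanishes on
the curve. As no `μ_j` is a combination of the other exponents, `t^{μ_j}` can occur in `η` along the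
curve only through the linear part of `η`, whence `Dη(0)` vanishes on the span `W` of the first `k`
coordinate vectors, and `Θ^*ω` and `ω` agree on `W` at `0`. By Witt's extension theorem there is a
linear map which is the identity on `W`, hence on the curve, and which carries one form to the other
at `0`; after composing with it the two forms agree at `0` and still differ by the differential of
a 1-form `η` vanishing on the curve. Moser's path method now applies: the field `X_s` defined by
`ι_{X_s}(ω + s dη) = -η` vanishes on the curve, so its flow fixes the curve. The flow, together with
its smooth dependence on the initial point, is obtained by applying the inverse function theorem to
the integral equation of the flow on the Banach space of continuous paths.
-/

section

open scoped ContDiff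

set_option maxSynthPendingDepth 3

section SmoothGerms

variable {E F G : Type*} [NormedAddCommGroup E] [NormedSpace ℝ E]
  [NormedAddCommGroup F] [NormedSpace ℝ F] [NormedAddCommGroup G] [NormedSpace ℝ G]

/-- The germ of `f` at `p` is smooth. This is stronger than `ContDiffAt ℝ ∞ f p`, which provides
for each finite order a neighbourhood depending on that order. -/
def SmoothNear (f : E → F) (p : E) : Prop := ∀ᶠ x in 𝓝 p, ContDiffAt ℝ ∞ f x

theorem smoothNear_iff_contDiffOn {f : E → F} {p : E} :
    SmoothNear f p ↔ ∃ U ∈ 𝓝 p, ContDiffOn ℝ ∞ f U := by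
  constructor
  · exact fun h => ⟨_, h, fun _ hx => ContDiffAt.contDiffWithinAt hx⟩
  · rintro ⟨U, hU, h⟩
    filter_upwards [eventually_mem_nhds_iff.2 hU] with x hx using h.contDiffAt hx

namespace SmoothNear

theorem of_contDiff {f : E → F} (hf : ContDiff ℝ ∞ f) (p : E) : SmoothNear f p :=
  Eventually.of_forall fun _ => hf.contDiffAt

theorem contDiffAt {f : E → F} {p : E} (hf : SmoothNear f p) : ContDiffAt ℝ ∞ f p :=
  hf.self_of_nhds

theorem differentiableAt {f : E → F} {p : E} (hf : SmoothNear f p) : DifferentiableAt ℝ f p :=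
  hf.contDiffAt.differentiableAt (by simp)

theorem continuousAt {f : E → F} {p : E} (hf : SmoothNear f p) : ContinuousAt f p :=
  hf.contDiffAt.continuousAt

theorem eventually {f : E → F} {p : E} (hf : SmoothNear f p) : ∀ᶠ x in 𝓝 p, SmoothNear f x :=
  hf.eventually_nhds

theorem comp {g : F → G} {f : E → F} {p : E} (hg : SmoothNear g (f p)) (hf : SmoothNear f p) :
    SmoothNear (g ∘ f) p := by
  filter_upwards [hf, hf.continuousAt.eventually hg] with x hfx hgx using hgx.comp x hfx

end SmoothNear

theorem exists_contDiff_eventuallyEq_nhdsSet [FiniteDimensional ℝ E] {f : E → F} {Z : Set E}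
    (hZ : IsClosed Z) (hf : ∀ᶠ x in 𝓝ˢ Z, ContDiffAt ℝ ∞ f x) :
    ∃ g : E → F, ContDiff ℝ ∞ g ∧ g =ᶠ[𝓝ˢ Z] f := by
  obtain ⟨S, hS, hZS, hfS⟩ := mem_nhdsSet_iff_exists.1 hf
  obtain ⟨χ, hχ0, hχ1, -⟩ := exists_contMDiffMap_zero_one_nhds_of_isClosed (n := ⊤)
    (modelWithCornersSelf ℝ E) hS.isClosed_compl hZ (Set.disjoint_compl_left_iff_subset.2 hZS)
  refine ⟨fun x => χ x • f x, contDiff_iff_contDiffAt.2 fun x => ?_, ?_⟩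
  · by_cases hx : x ∈ S
    · exact χ.contMDiff.contDiff.contDiffAt.smul (hfS hx)
    · refine (contDiffAt_const (c := (0 : F))).congr_of_eventuallyEq ?_
      filter_upwards [hχ0.filter_mono (nhds_le_nhdsSet hx)] with y hy
      rw [hy, zero_smul]
  · filter_upwards [hχ1] with x hx
    rw [hx, one_smul]

theorem SmoothNear.exists_contDiff [FiniteDimensional ℝ E] {f : E → F} {p : E}
    (hf : SmoothNear f p) : ∃ g : E → F, ContDiff ℝ ∞ g ∧ g =ᶠ[𝓝 p] f := by
  simpa only [nhdsSet_singleton] using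
    exists_contDiff_eventuallyEq_nhdsSet (isClosed_singleton (x := p)) (by rwa [nhdsSet_singleton])

theorem exists_smoothNear_inverse [CompleteSpace E] {f : E → F} (hf : ContDiff ℝ ∞ f) {a : E}
    {f' : E ≃L[ℝ] F} (hf' : HasFDerivAt f (f' : E →L[ℝ] F) a) :
    ∃ g : F → E, SmoothNear g (f a) ∧ g (f a) = a ∧
      (∀ᶠ x in 𝓝 a, g (f x) = x) ∧ ∀ᶠ y in 𝓝 (f a), f (g y) = y := by
  have hn : (∞ : WithTop ℕ∞) ≠ 0 := by simp
  let e := hf.contDiffAt.toOpenPartialHomeomorph f hf' hn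
  have ha : a ∈ e.source := hf.contDiffAt.mem_toOpenPartialHomeomorph_source hf' hn
  have hfa : f a ∈ e.target := e.map_source ha
  have hga : e.symm (f a) = a := e.left_inv ha
  refine ⟨e.symm, ?_, hga, ?_, ?_⟩
  · have hInv : ∀ᶠ x in 𝓝 a, fderiv ℝ f x ∈ Set.range ((↑) : (E ≃L[ℝ] F) → E →L[ℝ] F) :=
      (hf.continuous_fderiv hn).continuousAt.eventually
        (ContinuousLinearEquiv.isOpen.mem_nhds ⟨f', hf'.fderiv.symm⟩)
    have hsymm : Tendsto e.symm (𝓝 (f a)) (𝓝 a) := by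
      simpa only [hga] using (e.continuousAt_symm hfa).tendsto
    filter_upwards [e.open_target.mem_nhds hfa, hsymm.eventually hInv] with y hy ⟨f'', hf''⟩
    refine e.contDiffAt_symm hy (f₀' := f'') ?_ hf.contDiffAt
    rw [hf'']
    exact (hf.differentiable hn _).hasFDerivAt
  · filter_upwards [e.open_source.mem_nhds ha] with x hx using e.left_inv hx
  · filter_upwards [e.open_target.mem_nhds hfa] with y hy using e.right_inv hy

end SmoothGerms

section PathSpace

open scoped unitInterval

universe u

variable {E F : Type u} [NormedAddCommGroup E] [NormedSpace ℝ E]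
  [NormedAddCommGroup F] [NormedSpace ℝ F]

/-- Pointwise application of a path of operators to a path of vectors, as a bounded bilinear map.
Derivatives of superposition operators are of this form. -/
def pathApply : C(I, E →L[ℝ] F) →L[ℝ] C(I, E) →L[ℝ] C(I, F) :=
  LinearMap.mkContinuous₂
    (LinearMap.mk₂ ℝ
      (fun (a : C(I, E →L[ℝ] F)) (γ : C(I, E)) =>
        (⟨fun s => a s (γ s), by fun_prop⟩ : C(I, F)))
      (by intros; ext; simp) (by intros; ext; simp) (by intros; ext; simp) (by intros; ext; simp))
    1 fun a γ => by
      rw [ContinuousMap.norm_le _ (by positivity), one_mul]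
      intro s
      exact ((a s).le_opNorm (γ s)).trans
        (mul_le_mul (a.norm_coe_le_norm s) (γ.norm_coe_le_norm s) (norm_nonneg _) (norm_nonneg a))

@[simp]
theorem pathApply_apply (a : C(I, E →L[ℝ] F)) (γ : C(I, E)) (s : I) :
    pathApply a γ s = a s (γ s) := rfl

/-- The embedding of a normed space into its path space by constant paths. -/
def constPath (E : Type*) [NormedAddCommGroup E] [NormedSpace ℝ E] : E →L[ℝ] C(I, E) :=
  LinearMap.mkContinuous
    { toFun := ContinuousMap.const I, map_add' := fun _ _ => rfl, map_smul' := fun _ _ => rfl }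
    1 fun x => by
      rw [ContinuousMap.norm_le _ (by positivity), one_mul]
      exact fun _ => le_rfl

@[simp]
theorem constPath_apply (x : E) (s : I) : constPath E x s = x := rfl

/-- The primitive vanishing at `0`, as a bounded operator on paths. -/
def primitive (F : Type*) [NormedAddCommGroup F] [NormedSpace ℝ F] : C(I, F) →L[ℝ] C(I, F) :=
  LinearMap.mkContinuous
    { toFun := fun γ => ⟨fun s => ∫ τ in (0 : ℝ)..s, Set.IccExtend zero_le_one γ τ,
        (intervalIntegral.continuous_primitive
          (fun _ _ => γ.continuous.Icc_extend'.intervalIntegrable _ _) 0).comp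
          continuous_subtype_val⟩
      map_add' := fun γ δ => by
        ext s
        exact intervalIntegral.integral_add (γ.continuous.Icc_extend'.intervalIntegrable _ _)
          (δ.continuous.Icc_extend'.intervalIntegrable _ _)
      map_smul' := fun c γ => by
        ext s
        exact intervalIntegral.integral_smul c _ }
    1 fun γ => by
      rw [ContinuousMap.norm_le _ (by positivity), one_mul]
      intro s
      refine (intervalIntegral.norm_integral_le_of_norm_le_const
        fun τ _ => γ.norm_coe_le_norm _).trans ?_
      rw [sub_zero, abs_of_nonneg s.2.1]
      exact mul_le_of_le_one_right (norm_nonneg _) s.2.2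

theorem primitive_apply (γ : C(I, F)) (s : I) :
    primitive F γ s = ∫ τ in (0 : ℝ)..s, Set.IccExtend zero_le_one γ τ := rfl

theorem primitive_one_apply {γ : C(I, F)} {k : ℝ → F} (h : ∀ s : I, γ s = k s) :
    primitive F γ 1 = ∫ t in (0 : ℝ)..1, k t := by
  rw [primitive_apply, Set.Icc.coe_one]
  refine intervalIntegral.integral_congr fun t ht => ?_
  rw [Set.uIcc_of_le zero_le_one] at ht
  rw [Set.IccExtend_of_mem _ _ ht, h]

theorem exists_hasDerivAt_of_eq_constPath_add_primitive [CompleteSpace F] {γ δ : C(I, F)} {c : F}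
    (h : γ = constPath F c + primitive F δ) :
    ∃ y : ℝ → F, y 0 = c ∧ (∀ s : I, y s = γ s) ∧
      ∀ s : I, HasDerivAt y (δ s) s := by
  refine ⟨fun s => c + ∫ τ in (0 : ℝ)..s, Set.IccExtend zero_le_one δ τ, by simp,
    fun s => ?_, fun s => ?_⟩
  · rw [h]
    rfl
  · rw [← Set.IccExtend_val zero_le_one δ s]
    exact (intervalIntegral.integral_hasDerivAt_right
      (δ.continuous.Icc_extend'.intervalIntegrable _ _)
      δ.continuous.Icc_extend'.stronglyMeasurable.stronglyMeasurableAtFilter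
      δ.continuous.Icc_extend'.continuousAt).const_add c

/-- The superposition operator `γ ↦ (s ↦ k (s, γ s))` of a time-dependent map `k`. The flow lines of
a time-dependent vector field `X` starting at `x` are the solutions of
`γ = constPath E x + primitive E (superposition X γ)`. -/
def superposition (k : C(ℝ × E, F)) (γ : C(I, E)) : C(I, F) :=
  k.comp (ContinuousMap.prodMk ⟨Subtype.val, continuous_subtype_val⟩ γ)

omit [NormedSpace ℝ E] [NormedSpace ℝ F] in
@[simp]
theorem superposition_apply (k : C(ℝ × E, F)) (γ : C(I, E)) (s : I) :
    superposition k γ s = k (s, γ s) := rfl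

omit [NormedSpace ℝ E] [NormedSpace ℝ F] in
theorem continuous_superposition (k : C(ℝ × E, F)) : Continuous (superposition k) :=
  ContinuousMap.continuous_of_continuous_uncurry _ <| by
    simp only [Function.uncurry_def, superposition_apply]
    fun_prop

/-- The partial derivative in the second variable of a time-dependent map. -/
def spaceDeriv (k : C(ℝ × E, F)) (hk : ContDiff ℝ 1 k) : C(ℝ × E, E →L[ℝ] F) :=
  ⟨fun p => (fderiv ℝ k p).comp (ContinuousLinearMap.inr ℝ ℝ E),
    (hk.continuous_fderiv one_ne_zero).clm_comp continuous_const⟩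

@[simp]
theorem spaceDeriv_apply (k : C(ℝ × E, F)) (hk : ContDiff ℝ 1 k) (p : ℝ × E) (v : E) :
    spaceDeriv k hk p v = fderiv ℝ k p (0, v) := rfl

theorem hasFDerivAt_slice {k : ℝ × E → F} (hk : Differentiable ℝ k) (s : ℝ) (x : E) :
    HasFDerivAt (fun y => k (s, y)) ((fderiv ℝ k (s, x)).comp (ContinuousLinearMap.inr ℝ ℝ E)) x :=
  (hk (s, x)).hasFDerivAt.comp x (hasFDerivAt_prodMk_right s x)

theorem hasFDerivAt_superposition (k : C(ℝ × E, F)) (hk : ContDiff ℝ 1 k) (γ : C(I, E)) :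
    HasFDerivAt (superposition k) (pathApply (superposition (spaceDeriv k hk) γ)) γ := by
  rw [hasFDerivAt_iff_isLittleO_nhds_zero, Asymptotics.isLittleO_iff]
  intro ε hε
  obtain ⟨δ, hδ, hδε⟩ := Metric.continuousAt_iff.1
    (continuous_superposition (spaceDeriv k hk)).continuousAt ε hε
  filter_upwards [Metric.ball_mem_nhds (0 : C(I, E)) hδ] with η hη
  rw [mem_ball_zero_iff] at hη
  rw [ContinuousMap.norm_le _ (by positivity)]
  intro s
  have hbound : ∀ y ∈ Metric.ball (γ s) δ,
      ‖spaceDeriv k hk (s, y) - spaceDeriv k hk (s, γ s)‖ ≤ ε := fun y hy => by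
    have hdist : dist (γ + constPath E (y - γ s)) γ < δ := by
      rw [dist_eq_norm, add_sub_cancel_left, ContinuousMap.norm_lt_iff _ hδ]
      exact fun _ => by simpa only [constPath_apply, ← dist_eq_norm, Metric.mem_ball] using hy
    have hs := (ContinuousMap.dist_apply_le_dist s).trans (hδε hdist).le
    simpa only [superposition_apply, ContinuousMap.add_apply, constPath_apply, add_sub_cancel,
      dist_eq_norm] using hs
  have hmean := (convex_ball (γ s) δ).norm_image_sub_le_of_norm_hasFDerivWithin_le'
    (fun y _ => (hasFDerivAt_slice (hk.differentiable one_ne_zero) s y).hasFDerivWithinAt)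
    hbound (Metric.mem_ball_self hδ) (y := γ s + η s)
    (by simpa only [Metric.mem_ball, dist_self_add_left] using (η.norm_coe_le_norm s).trans_lt hη)
  rw [add_sub_cancel_left] at hmean
  exact hmean.trans (mul_le_mul_of_nonneg_left (η.norm_coe_le_norm s) hε.le)

theorem contDiff_superposition_nat {E : Type u} [NormedAddCommGroup E] [NormedSpace ℝ E] (n : ℕ) :
    ∀ {F : Type u} [NormedAddCommGroup F] [NormedSpace ℝ F] (k : C(ℝ × E, F)),
      ContDiff ℝ n k → ContDiff ℝ n (superposition k) := by
  induction n with
  | zero => exact fun k _ => contDiff_zero.2 (continuous_superposition k)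
  | succ n ih =>
    intro F _ _ k hk
    have hk1 : ContDiff ℝ 1 k := hk.of_le (by exact_mod_cast Nat.le_add_left 1 n)
    have hDk : ContDiff ℝ n (spaceDeriv k hk1) :=
      (hk.fderiv_right (by norm_cast)).clm_comp contDiff_const
    have hApply : ContDiff ℝ n (pathApply (E := E) (F := F)) := by fun_prop
    push_cast
    rw [contDiff_succ_iff_hasFDerivAt (n := n)]
    exact ⟨fun γ => pathApply (superposition (spaceDeriv k hk1) γ),
      hApply.comp (ih _ hDk),
      hasFDerivAt_superposition k hk1⟩

theorem contDiff_superposition {k : C(ℝ × E, F)} (hk : ContDiff ℝ ∞ k) :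
    ContDiff ℝ ∞ (superposition k) :=
  contDiff_infty.2 fun n =>
    contDiff_superposition_nat n k (hk.of_le (by exact_mod_cast le_top))

theorem intervalIntegral_eq_primitive_superposition (k : C(ℝ × E, F)) (x : E) :
    ∫ t in (0 : ℝ)..1, k (t, x) = primitive F (superposition k (constPath E x)) 1 :=
  (primitive_one_apply fun _ => rfl).symm

theorem contDiff_intervalIntegral_zero_one {k : ℝ × E → F} (hk : ContDiff ℝ ∞ k) :
    ContDiff ℝ ∞ fun x => ∫ t in (0 : ℝ)..1, k (t, x) := by
  let K : C(ℝ × E, F) := ⟨k, hk.continuous⟩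
  simp_rw [show k = K from rfl, intervalIntegral_eq_primitive_superposition K]
  exact (ContinuousMap.evalCLM ℝ (1 : I) : C(I, F) →L[ℝ] F).contDiff.comp
    ((primitive F).contDiff.comp ((contDiff_superposition (k := K) hk).comp (constPath E).contDiff))

theorem fderiv_intervalIntegral_zero_one {k : ℝ × E → F} (hk : ContDiff ℝ 1 k) (x u : E) :
    fderiv ℝ (fun x => ∫ t in (0 : ℝ)..1, k (t, x)) x u =
      ∫ t in (0 : ℝ)..1, fderiv ℝ k (t, x) (0, u) := by
  let K : C(ℝ × E, F) := ⟨k, hk.continuous⟩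
  have hderiv : HasFDerivAt (fun x => primitive F (superposition K (constPath E x)) 1) _ x :=
    (ContinuousMap.evalCLM ℝ (1 : I) : C(I, F) →L[ℝ] F).hasFDerivAt.comp x
      ((primitive F).hasFDerivAt.comp x
        ((hasFDerivAt_superposition K hk _).comp x (constPath E).hasFDerivAt))
  simp_rw [show k = K from rfl, intervalIntegral_eq_primitive_superposition K]
  rw [hderiv.fderiv]
  exact primitive_one_apply fun _ => rfl

theorem norm_primitive_pathApply_pow_le (a : C(I, F →L[ℝ] F)) (n : ℕ) (γ : C(I, F)) (s : I) :
    ‖((primitive F ∘L pathApply a) ^ n) γ s‖ ≤ (‖a‖ * s) ^ n / n.factorial * ‖γ‖ := by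
  induction n generalizing s with
  | zero => simpa using γ.norm_coe_le_norm s
  | succ n ih =>
    set δ := ((primitive F ∘L pathApply a) ^ n) γ
    have hint : ∫ τ in (0 : ℝ)..s, ‖a‖ * ((‖a‖ * τ) ^ n / n.factorial * ‖γ‖) =
        (‖a‖ * s) ^ (n + 1) / (n + 1).factorial * ‖γ‖ := by
      simp_rw [mul_pow, show ∀ τ : ℝ, ‖a‖ * (‖a‖ ^ n * τ ^ n / n.factorial * ‖γ‖) =
        ‖a‖ ^ (n + 1) / n.factorial * ‖γ‖ * τ ^ n from fun τ => by ring]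
      rw [intervalIntegral.integral_const_mul, integral_pow, Nat.factorial_succ]
      push_cast
      field_simp
      simp
    rw [pow_succ']
    change ‖∫ τ in (0 : ℝ)..s, Set.IccExtend zero_le_one (pathApply a δ) τ‖ ≤ _
    rw [← hint]
    refine intervalIntegral.norm_integral_le_of_norm_le s.2.1
      (Eventually.of_forall fun τ hτ => ?_) (Continuous.intervalIntegrable (by fun_prop) _ _)
    have hτI : τ ∈ Set.Icc (0 : ℝ) 1 := ⟨hτ.1.le, hτ.2.trans s.2.2⟩
    rw [Set.IccExtend_of_mem _ _ hτI]
    exact ((a ⟨τ, hτI⟩).le_opNorm _).trans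
      (mul_le_mul (a.norm_coe_le_norm _) (ih ⟨τ, hτI⟩) (norm_nonneg _) (norm_nonneg a))

theorem isUnit_one_sub_of_norm_pow_lt_one {R : Type*} [NormedRing R] [CompleteSpace R] {x : R}
    {n : ℕ} (h : ‖x ^ n‖ < 1) : IsUnit (1 - x) := by
  have hcomm : Commute (1 - x) (∑ i ∈ Finset.range n, x ^ i) :=
    Commute.sum_right _ _ _ fun i _ =>
      ((Commute.one_left x).sub_left (Commute.refl x)).pow_right i
  refine (hcomm.isUnit_mul_iff.1 ?_).1
  rw [mul_neg_geom_sum]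
  exact isUnit_one_sub_of_norm_lt_one h

theorem isUnit_one_sub_primitive_pathApply [CompleteSpace F] (a : C(I, F →L[ℝ] F)) :
    IsUnit (1 - primitive F ∘L pathApply a) := by
  obtain ⟨n, hn⟩ := ((FloorSemiring.tendsto_pow_div_factorial_atTop ‖a‖).eventually
    (gt_mem_nhds one_half_pos)).exists
  refine isUnit_one_sub_of_norm_pow_lt_one (R := C(I, F) →L[ℝ] C(I, F)) (n := n)
    (lt_of_le_of_lt ?_ one_half_lt_one)
  refine ContinuousLinearMap.opNorm_le_bound _ (by positivity) fun γ => ?_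
  refine (ContinuousMap.norm_le _ (by positivity)).2 fun s => ?_
  refine (norm_primitive_pathApply_pow_le a n γ s).trans ?_
  have hs : (‖a‖ * s) ^ n ≤ ‖a‖ ^ n :=
    pow_le_pow_left₀ (mul_nonneg (norm_nonneg a) s.2.1)
      (mul_le_of_le_one_right (norm_nonneg a) s.2.2) n
  exact mul_le_mul_of_nonneg_right ((div_le_div_of_nonneg_right hs (by positivity)).trans hn.le)
    (norm_nonneg γ)

theorem exists_flow_of_rest_point [CompleteSpace E] {X : C(ℝ × E, E)} (hX : ContDiff ℝ ∞ X)
    (hX0 : ∀ s, X (s, 0) = 0) :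
    ∃ Γ : E → C(I, E), SmoothNear Γ 0 ∧ Γ 0 = 0 ∧
      (∀ᶠ x in 𝓝 0, Γ x = constPath E x + primitive E (superposition X (Γ x))) ∧
      ∀ᶠ x in 𝓝 0, (∀ s : I, X (s, x) = 0) → Γ x = constPath E x := by
  let Φ : C(I, E) → C(I, E) := fun γ => γ - primitive E (superposition X γ)
  have hΦ : ContDiff ℝ ∞ Φ :=
    contDiff_id.sub ((primitive E).contDiff.comp (contDiff_superposition hX))
  have hX1 : ContDiff ℝ 1 X := hX.of_le (by exact_mod_cast le_top)
  have hΦ0 : Φ 0 = 0 := by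
    have : superposition X 0 = 0 := by ext s; exact hX0 s
    simp only [Φ, this, map_zero, sub_zero]
  obtain ⟨u, hu⟩ := isUnit_one_sub_primitive_pathApply (superposition (spaceDeriv X hX1) 0)
  have hΦ' : HasFDerivAt Φ
      (ContinuousLinearEquiv.ofUnit u : C(I, E) →L[ℝ] C(I, E)) 0 := by
    change HasFDerivAt Φ (u : C(I, E) →L[ℝ] C(I, E)) 0
    rw [hu]
    exact (hasFDerivAt_id _).sub
      ((primitive E).hasFDerivAt.comp _ (hasFDerivAt_superposition X hX1 0))
  obtain ⟨g, hg, hg0, hgΦ, hΦg⟩ := exists_smoothNear_inverse hΦ hΦ'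
  rw [hΦ0] at hg hg0 hΦg
  have hconst : Tendsto (constPath E) (𝓝 0) (𝓝 0) := by
    simpa only [map_zero] using (constPath E).continuous.tendsto 0
  refine ⟨g ∘ constPath E, ?_, ?_, ?_, ?_⟩
  · refine SmoothNear.comp ?_ (.of_contDiff (constPath E).contDiff 0)
    rwa [map_zero]
  · rw [Function.comp_apply, map_zero, hg0]
  · filter_upwards [hconst.eventually hΦg] with x hx
    exact eq_add_of_sub_eq hx
  · filter_upwards [hconst.eventually hgΦ] with x hx hXx
    have : superposition X (constPath E x) = 0 := by ext s; exact hXx s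
    simpa only [Φ, this, map_zero, sub_zero, Function.comp_apply] using hx

theorem fderiv_flow_apply {X : C(ℝ × E, E)} (hX : ContDiff ℝ 1 X) {Γ : E → C(I, E)} {x : E}
    (hΓ : DifferentiableAt ℝ Γ x)
    (hflow : ∀ᶠ y in 𝓝 x, Γ y = constPath E y + primitive E (superposition X (Γ y))) (u : E) :
    fderiv ℝ Γ x u = constPath E u +
      primitive E (pathApply (superposition (spaceDeriv X hX) (Γ x)) (fderiv ℝ Γ x u)) := by
  have hderiv : HasFDerivAt (fun y => constPath E y + primitive E (superposition X (Γ y))) _ x :=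
    (constPath E).hasFDerivAt.add ((primitive E).hasFDerivAt.comp x
      ((hasFDerivAt_superposition X hX _).comp x hΓ.hasFDerivAt))
  exact DFunLike.congr_fun (hderiv.congr_of_eventuallyEq hflow).fderiv u

end PathSpace

section DifferentialForms

variable {E F G : Type*} [NormedAddCommGroup E] [NormedSpace ℝ E]
  [NormedAddCommGroup F] [NormedSpace ℝ F] [NormedAddCommGroup G] [NormedSpace ℝ G]

/-- The exterior derivative of a 1-form. Here and below a 2-form on `E` is a map into the curried
bilinear forms `E →L[ℝ] E →L[ℝ] ℝ`; antisymmetry is not built in. -/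
def extDeriv₁ (β : E → E →L[ℝ] ℝ) (x : E) : E →L[ℝ] E →L[ℝ] ℝ :=
  fderiv ℝ β x - (fderiv ℝ β x).flip

/-- The pullback of a 1-form. -/
def pullback₁ (H : E → F) (β : F → F →L[ℝ] ℝ) (x : E) : E →L[ℝ] ℝ :=
  (β (H x)).comp (fderiv ℝ H x)

/-- The pullback of a 2-form. -/
def pullback₂ (H : E → F) (A : F → F →L[ℝ] F →L[ℝ] ℝ) (x : E) : E →L[ℝ] E →L[ℝ] ℝ :=
  (A (H x)).bilinearComp (fderiv ℝ H x) (fderiv ℝ H x)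

/-- The exterior derivative of the 2-form `A` vanishes at `x`. -/
def ClosedAt (A : E → E →L[ℝ] E →L[ℝ] ℝ) (x : E) : Prop :=
  ∀ u v w, fderiv ℝ A x u v w - fderiv ℝ A x v u w + fderiv ℝ A x w u v = 0

@[simp]
theorem extDeriv₁_apply (β : E → E →L[ℝ] ℝ) (x u v : E) :
    extDeriv₁ β x u v = fderiv ℝ β x u v - fderiv ℝ β x v u := rfl

@[simp]
theorem pullback₁_apply (H : E → F) (β : F → F →L[ℝ] ℝ) (x u : E) :
    pullback₁ H β x u = β (H x) (fderiv ℝ H x u) := rfl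

@[simp]
theorem pullback₂_apply (H : E → F) (A : F → F →L[ℝ] F →L[ℝ] ℝ) (x u v : E) :
    pullback₂ H A x u v = A (H x) (fderiv ℝ H x u) (fderiv ℝ H x v) := rfl

theorem extDeriv₁_add {β γ : E → E →L[ℝ] ℝ} {x : E} (hβ : DifferentiableAt ℝ β x)
    (hγ : DifferentiableAt ℝ γ x) :
    extDeriv₁ (fun y => β y + γ y) x = extDeriv₁ β x + extDeriv₁ γ x := by
  ext u v
  simp only [extDeriv₁_apply, fderiv_fun_add hβ hγ, add_apply]
  ring

theorem contDiff_pullback₁ {H : E → F} (hH : ContDiff ℝ ∞ H) {β : F → F →L[ℝ] ℝ}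
    (hβ : ContDiff ℝ ∞ β) : ContDiff ℝ ∞ (pullback₁ H β) :=
  (hβ.comp hH).clm_comp (hH.fderiv_right le_rfl)

theorem contDiff_pullback₂ {H : E → F} (hH : ContDiff ℝ ∞ H)
    {A : F → F →L[ℝ] F →L[ℝ] ℝ} (hA : ContDiff ℝ ∞ A) : ContDiff ℝ ∞ (pullback₂ H A) := by
  have hDH : ContDiff ℝ ∞ (fderiv ℝ H) := hH.fderiv_right le_rfl
  have hflip : ContDiff ℝ ∞ fun x => ((A (H x)).comp (fderiv ℝ H x)).flip :=
    (ContinuousLinearMap.flipₗᵢ ℝ E F ℝ).contDiff.comp ((hA.comp hH).clm_comp hDH)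
  exact (ContinuousLinearMap.flipₗᵢ ℝ E E ℝ).contDiff.comp (hflip.clm_comp hDH)

theorem pullback₂_comp {g : F → G} {f : E → F} {x : E} (A : G → G →L[ℝ] G →L[ℝ] ℝ)
    (hg : DifferentiableAt ℝ g (f x)) (hf : DifferentiableAt ℝ f x) :
    pullback₂ (g ∘ f) A x = pullback₂ f (pullback₂ g A) x := by
  ext u v
  simp only [pullback₂_apply, fderiv_comp x hg hf, Function.comp_apply,
    ContinuousLinearMap.comp_apply]

theorem pullback₂_of_eventuallyEq_id {H : E → E} {x : E} (h : H =ᶠ[𝓝 x] id)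
    (A : E → E →L[ℝ] E →L[ℝ] ℝ) : pullback₂ H A x = A x := by
  ext u v
  simp [pullback₂_apply, h.fderiv_eq, h.eq_of_nhds]

theorem ClosedAt.congr {A B : E → E →L[ℝ] E →L[ℝ] ℝ} {x : E} (hA : ClosedAt A x)
    (h : B =ᶠ[𝓝 x] A) : ClosedAt B x := by
  intro u v w
  rw [h.fderiv_eq]
  exact hA u v w

theorem ClosedAt.sub {A B : E → E →L[ℝ] E →L[ℝ] ℝ} {x : E} (hA : ClosedAt A x) (hB : ClosedAt B x)
    (hAd : DifferentiableAt ℝ A x) (hBd : DifferentiableAt ℝ B x) :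
    ClosedAt (fun y => A y - B y) x := by
  intro u v w
  rw [fderiv_fun_sub hAd hBd]
  simp only [sub_apply]
  linear_combination hA u v w - hB u v w

theorem fderiv_clm_apply₂ {A : E → F →L[ℝ] G →L[ℝ] ℝ} {x : E} (hA : DifferentiableAt ℝ A x)
    (u : E) (v : F) (w : G) : fderiv ℝ (fun y => A y v w) x u = fderiv ℝ A x u v w := by
  have := (hA.hasFDerivAt.clm_apply (hasFDerivAt_const v x)).clm_apply (hasFDerivAt_const w x)
  rw [this.fderiv]
  simp

theorem fderiv_clm_apply₁ {β : E → F →L[ℝ] ℝ} {x : E} (hβ : DifferentiableAt ℝ β x)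
    (u : E) (v : F) : fderiv ℝ (fun y => β y v) x u = fderiv ℝ β x u v := by
  have := hβ.hasFDerivAt.clm_apply (hasFDerivAt_const v x)
  rw [this.fderiv]
  simp

theorem contDiff_extDeriv₁ {β : E → E →L[ℝ] ℝ} (hβ : ContDiff ℝ ∞ β) :
    ContDiff ℝ ∞ (extDeriv₁ β) := by
  have hDβ : ContDiff ℝ ∞ (fderiv ℝ β) := hβ.fderiv_right le_rfl
  exact hDβ.sub ((ContinuousLinearMap.flipₗᵢ ℝ E E ℝ).contDiff.comp hDβ)

theorem closedAt_extDeriv₁ {β : E → E →L[ℝ] ℝ} (hβ : ContDiff ℝ ∞ β)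
    (x : E) : ClosedAt (extDeriv₁ β) x := by
  have hDβ : DifferentiableAt ℝ (fderiv ℝ β) x :=
    ((hβ.fderiv_right (m := ∞) le_rfl).differentiable (by simp)) x
  have hsymm : IsSymmSndFDerivAt ℝ β x :=
    hβ.contDiffAt.isSymmSndFDerivAt
    (by simp only [minSmoothness_of_isRCLikeNormedField]; exact WithTop.coe_le_coe.2 le_top)
  have hderiv : ∀ u v w, fderiv ℝ (extDeriv₁ β) x u v w =
      fderiv ℝ (fderiv ℝ β) x u v w - fderiv ℝ (fderiv ℝ β) x u w v := fun u v w => by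
    rw [← fderiv_clm_apply₂ ((contDiff_extDeriv₁ hβ).differentiable (by simp) x)]
    simp only [extDeriv₁_apply]
    rw [fderiv_fun_sub (by fun_prop) (by fun_prop), sub_apply,
      fderiv_clm_apply₂ hDβ, fderiv_clm_apply₂ hDβ]
  intro u v w
  rw [hderiv, hderiv, hderiv, hsymm v u, hsymm w u, hsymm w v]
  ring

theorem extDeriv₁_pullback₁ {H : E → F} (hH : ContDiff ℝ ∞ H) {β : F → F →L[ℝ] ℝ}
    (hβ : ContDiff ℝ ∞ β) : extDeriv₁ (pullback₁ H β) = pullback₂ H (extDeriv₁ β) := by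
  ext x u v
  have hsymm : IsSymmSndFDerivAt ℝ H x := hH.contDiffAt.isSymmSndFDerivAt
    (by simp only [minSmoothness_of_isRCLikeNormedField]; exact WithTop.coe_le_coe.2 le_top)
  have hDH : DifferentiableAt ℝ (fderiv ℝ H) x :=
    ((hH.fderiv_right (m := ∞) le_rfl).differentiable (by simp)) x
  have hβH : HasFDerivAt (β ∘ H) ((fderiv ℝ β (H x)).comp (fderiv ℝ H x)) x :=
    (hβ.differentiable (by simp) _).hasFDerivAt.comp x (hH.differentiable (by simp) x).hasFDerivAt
  have hderiv : HasFDerivAt (pullback₁ H β) _ x := hβH.clm_comp hDH.hasFDerivAt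
  simp only [extDeriv₁_apply, hderiv.fderiv, pullback₂_apply]
  simp [hsymm u v]

theorem fderiv_pullback₂_apply {H : E → F} (hH : ContDiff ℝ ∞ H)
    {A : F → F →L[ℝ] F →L[ℝ] ℝ} (hA : ContDiff ℝ ∞ A) (x u v w : E) :
    fderiv ℝ (pullback₂ H A) x u v w =
      fderiv ℝ A (H x) (fderiv ℝ H x u) (fderiv ℝ H x v) (fderiv ℝ H x w) +
        A (H x) (fderiv ℝ (fderiv ℝ H) x u v) (fderiv ℝ H x w) +
        A (H x) (fderiv ℝ H x v) (fderiv ℝ (fderiv ℝ H) x u w) := by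
  have hDH : HasFDerivAt (fderiv ℝ H) _ x :=
    ((hH.fderiv_right (m := ∞) le_rfl).differentiable (by simp) x).hasFDerivAt
  have hAH : HasFDerivAt (A ∘ H) ((fderiv ℝ A (H x)).comp (fderiv ℝ H x)) x :=
    (hA.differentiable (by simp) _).hasFDerivAt.comp x (hH.differentiable (by simp) x).hasFDerivAt
  have hderiv : HasFDerivAt (fun y => pullback₂ H A y v w) _ x :=
    (hAH.clm_apply (hDH.clm_apply (hasFDerivAt_const v x))).clm_apply
      (hDH.clm_apply (hasFDerivAt_const w x))
  rw [← fderiv_clm_apply₂ ((contDiff_pullback₂ hH hA).differentiable (by simp) x), hderiv.fderiv]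
  simp
  ring

theorem closedAt_pullback₂ {H : E → F} (hH : ContDiff ℝ ∞ H)
    {A : F → F →L[ℝ] F →L[ℝ] ℝ} (hA : ContDiff ℝ ∞ A) {x : E}
    (hskew : ∀ u v, A (H x) u v = -A (H x) v u) (hclosed : ClosedAt A (H x)) :
    ClosedAt (pullback₂ H A) x := by
  intro u v w
  have hsymm : IsSymmSndFDerivAt ℝ H x := hH.contDiffAt.isSymmSndFDerivAt
    (by simp only [minSmoothness_of_isRCLikeNormedField]; exact WithTop.coe_le_coe.2 le_top)
  rw [fderiv_pullback₂_apply hH hA, fderiv_pullback₂_apply hH hA, fderiv_pullback₂_apply hH hA,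
    hsymm v u, hsymm w u, hsymm w v, hskew (fderiv ℝ H x u) (fderiv ℝ (fderiv ℝ H) x v w),
    hskew (fderiv ℝ H x v) (fderiv ℝ (fderiv ℝ H) x u w)]
  linear_combination hclosed (fderiv ℝ H x u) (fderiv ℝ H x v) (fderiv ℝ H x w)

end DifferentialForms

section HomotopyFormula

universe u

variable {E F : Type u} [NormedAddCommGroup E] [NormedSpace ℝ E]
  [NormedAddCommGroup F] [NormedSpace ℝ F]

/-- The homotopy operator `∫₀¹ ι_{∂t} H^*α dt` of a homotopy `H`, from 2-forms to 1-forms. -/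
def homotopyOperator (H : ℝ × E → F) (α : F → F →L[ℝ] F →L[ℝ] ℝ) (x : E) : E →L[ℝ] ℝ :=
  ∫ t in (0 : ℝ)..1, (pullback₂ H α (t, x) (1, 0)).comp (ContinuousLinearMap.inr ℝ ℝ E)

theorem contDiff_contract_pullback₂ {H : ℝ × E → F} (hH : ContDiff ℝ ∞ H)
    {α : F → F →L[ℝ] F →L[ℝ] ℝ} (hα : ContDiff ℝ ∞ α) :
    ContDiff ℝ ∞ fun p => (pullback₂ H α p (1, 0)).comp (ContinuousLinearMap.inr ℝ ℝ E) :=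
  ((contDiff_pullback₂ hH hα).clm_apply contDiff_const).clm_comp contDiff_const

theorem contDiff_homotopyOperator {H : ℝ × E → F} (hH : ContDiff ℝ ∞ H)
    {α : F → F →L[ℝ] F →L[ℝ] ℝ} (hα : ContDiff ℝ ∞ α) : ContDiff ℝ ∞ (homotopyOperator H α) :=
  contDiff_intervalIntegral_zero_one (contDiff_contract_pullback₂ hH hα)

theorem homotopyOperator_eq_zero {H : ℝ × E → F} {α : F → F →L[ℝ] F →L[ℝ] ℝ} {x : E}
    (h : ∀ t ∈ Set.Icc (0 : ℝ) 1, ∀ v, pullback₂ H α (t, x) (1, 0) (0, v) = 0) :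
    homotopyOperator H α x = 0 := by
  rw [← intervalIntegral.integral_zero (a := (0 : ℝ)) (b := 1)]
  refine intervalIntegral.integral_congr fun t ht => ?_
  rw [Set.uIcc_of_le zero_le_one] at ht
  ext v
  exact h t ht v

theorem fderiv_homotopyOperator {H : ℝ × E → F} (hH : ContDiff ℝ ∞ H)
    {α : F → F →L[ℝ] F →L[ℝ] ℝ} (hα : ContDiff ℝ ∞ α) (x u v : E) :
    fderiv ℝ (homotopyOperator H α) x u v =
      ∫ t in (0 : ℝ)..1, fderiv ℝ (pullback₂ H α) (t, x) (0, u) (1, 0) (0, v) := by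
  have hk := contDiff_contract_pullback₂ hH hα
  have hkder : Continuous fun t : ℝ => fderiv ℝ
      (fun p => (pullback₂ H α p (1, 0)).comp (ContinuousLinearMap.inr ℝ ℝ E)) (t, x) (0, u) := by
    have := hk.continuous_fderiv (by simp)
    fun_prop
  unfold homotopyOperator
  rw [fderiv_intervalIntegral_zero_one (hk.of_le (by exact_mod_cast le_top)),
    ContinuousLinearMap.intervalIntegral_apply (hkder.intervalIntegrable _ _)]
  refine intervalIntegral.integral_congr fun t _ => ?_
  rw [← fderiv_clm_apply₁ (hk.differentiable (by simp) _),
    ← fderiv_clm_apply₂ ((contDiff_pullback₂ hH hα).differentiable (by simp) _)]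
  rfl

theorem extDeriv₁_homotopyOperator {H : ℝ × E → F} (hH : ContDiff ℝ ∞ H)
    {α : F → F →L[ℝ] F →L[ℝ] ℝ} (hα : ContDiff ℝ ∞ α) (hskew : ∀ y u v, α y u v = -α y v u) {x : E}
    (hclosed : ∀ t ∈ Set.Icc (0 : ℝ) 1, ClosedAt α (H (t, x))) :
    extDeriv₁ (homotopyOperator H α) x =
      pullback₂ (fun y => H (1, y)) α x - pullback₂ (fun y => H (0, y)) α x := by
  ext u v
  have hB := contDiff_pullback₂ hH hα
  have hcont : ∀ a b c : ℝ × E,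
      Continuous fun t : ℝ => fderiv ℝ (pullback₂ H α) (t, x) a b c := fun a b c => by
    have := hB.continuous_fderiv (by simp)
    fun_prop
  have htime : ∀ t ∈ Set.uIcc (0 : ℝ) 1, HasDerivAt (fun t => pullback₂ H α (t, x) (0, u) (0, v))
      (fderiv ℝ (pullback₂ H α) (t, x) (0, u) (1, 0) (0, v) -
        fderiv ℝ (pullback₂ H α) (t, x) (0, v) (1, 0) (0, u)) t := fun t ht => by
    rw [Set.uIcc_of_le zero_le_one] at ht
    have hclosedB := closedAt_pullback₂ hH hα (hskew _) (hclosed t ht) (1, 0) (0, u) (0, v)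
    have hpath : HasDerivAt (fun t : ℝ => (t, x)) ((1 : ℝ), (0 : E)) t :=
      (hasDerivAt_id t).prodMk (hasDerivAt_const t x)
    have hder := (((hB.differentiable (by simp) (t, x)).clm_apply (differentiableAt_const (0, u))
      |>.clm_apply (differentiableAt_const (0, v))).hasFDerivAt).comp_hasDerivAt t hpath
    rw [fderiv_clm_apply₂ (hB.differentiable (by simp) _)] at hder
    exact hder.congr_deriv (by linear_combination hclosedB)
  have hslice : ∀ t, pullback₂ (fun y => H (t, y)) α x u v = pullback₂ H α (t, x) (0, u) (0, v) :=
    fun t => by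
      simp [(hasFDerivAt_slice (hH.differentiable (by simp)) t x).fderiv]
  rw [extDeriv₁_apply, fderiv_homotopyOperator hH hα, fderiv_homotopyOperator hH hα,
    ← intervalIntegral.integral_sub ((hcont _ _ _).intervalIntegrable _ _)
      ((hcont _ _ _).intervalIntegrable _ _),
    intervalIntegral.integral_eq_sub_of_hasDerivAt htime
      (((hcont _ _ _).sub (hcont _ _ _)).intervalIntegrable _ _)]
  simp only [sub_apply, hslice]

end HomotopyFormula

section Moser

open scoped unitInterval

universe u

variable {E : Type u} [NormedAddCommGroup E] [NormedSpace ℝ E]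

/-- A germ at `0` of a closed 2-form, represented by a form that is smooth on the whole space but
closed only near `0`. -/
structure IsClosedGerm (A : E → E →L[ℝ] E →L[ℝ] ℝ) : Prop where
  contDiff : ContDiff ℝ ∞ A
  skew : ∀ x u v, A x u v = -A x v u
  closed : ∀ᶠ x in 𝓝 0, ClosedAt A x

theorem isClosedGerm_pullback₂ {H : E → E} (hH : ContDiff ℝ ∞ H) (hH0 : H 0 = 0)
    {A : E → E →L[ℝ] E →L[ℝ] ℝ} (hA : IsClosedGerm A) : IsClosedGerm (pullback₂ H A) where
  contDiff := contDiff_pullback₂ hH hA.contDiff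
  skew _ _ _ := hA.skew _ _ _
  closed := by
    have hH0' : Tendsto H (𝓝 0) (𝓝 0) := by simpa only [hH0] using hH.continuous.tendsto 0
    filter_upwards [hH0'.eventually hA.closed] with x hx using
      closedAt_pullback₂ hH hA.contDiff (hA.skew _) hx

theorem exists_equiv_coe_eq_of_injective [FiniteDimensional ℝ E] {B : E →L[ℝ] E →L[ℝ] ℝ}
    (hB : Function.Injective B) :
    ∃ e : E ≃L[ℝ] (E →L[ℝ] ℝ), (e : E →L[ℝ] E →L[ℝ] ℝ) = B := by
  have hdim : Module.finrank ℝ E = Module.finrank ℝ (E →L[ℝ] ℝ) := by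
    rw [← (LinearMap.toContinuousLinearMap (𝕜 := ℝ) (E := E) (F' := ℝ)).finrank_eq]
    exact (Subspace.dual_finrank_eq (K := ℝ) (V := E)).symm
  refine ⟨(LinearMap.linearEquivOfInjective (B : E →ₗ[ℝ] E →L[ℝ] ℝ) hB
    hdim).toContinuousLinearEquiv, ?_⟩
  ext u v
  simp [LinearMap.linearEquivOfInjective_apply]

theorem exists_moser_field [FiniteDimensional ℝ E] {P : Type*} [NormedAddCommGroup P]
    [NormedSpace ℝ P] [FiniteDimensional ℝ P] {A : P → E →L[ℝ] E →L[ℝ] ℝ} (hA : ContDiff ℝ ∞ A)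
    {η : P → E →L[ℝ] ℝ} (hη : ContDiff ℝ ∞ η) {Z : Set P} (hZ : IsClosed Z)
    (hinj : ∀ p ∈ Z, Function.Injective (A p)) :
    ∃ X : P → E, ContDiff ℝ ∞ X ∧
      ∀ᶠ p in 𝓝ˢ Z, A p (X p) = -η p ∧ (η p = 0 → X p = 0) := by
  have hequiv : ∀ᶠ p in 𝓝ˢ Z, ∃ e : E ≃L[ℝ] (E →L[ℝ] ℝ), (e : E →L[ℝ] E →L[ℝ] ℝ) = A p :=
    (ContinuousLinearEquiv.isOpen.preimage hA.continuous).mem_nhdsSet.2 fun p hp =>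
      exists_equiv_coe_eq_of_injective (hinj p hp)
  obtain ⟨X, hX, hXeq⟩ := exists_contDiff_eventuallyEq_nhdsSet hZ
    (f := fun p => -(A p).inverse (η p)) <| hequiv.mono fun p ⟨e, he⟩ => by
      have hinv : ContDiffAt ℝ ∞ ContinuousLinearMap.inverse (A p) := he ▸ contDiffAt_map_inverse e
      exact ((hinv.comp p hA.contDiffAt).clm_apply hη.contDiffAt).neg
  refine ⟨X, hX, ?_⟩
  filter_upwards [hXeq, hequiv] with p hp ⟨e, he⟩
  rw [hp, ← he, ContinuousLinearMap.inverse_equiv]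
  exact ⟨by simp, fun h => by simp [h]⟩

/-- Cartan's formula turns `∂ₛ A + L_X A` into `d(η + ι_X A)`, which vanishes. -/
theorem moser_identity {A : ℝ × E → E →L[ℝ] E →L[ℝ] ℝ} {X : ℝ × E → E} {η : E → E →L[ℝ] ℝ}
    {p : ℝ × E} (hA : DifferentiableAt ℝ A p) (hX : DifferentiableAt ℝ X p)
    (hη : DifferentiableAt ℝ η p.2) (hskew : ∀ u v, A p u v = -A p v u)
    (hclosed : ∀ u v w, fderiv ℝ A p (0, u) v w - fderiv ℝ A p (0, v) u w +
      fderiv ℝ A p (0, w) u v = 0)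
    (htime : fderiv ℝ A p (1, 0) = extDeriv₁ η p.2)
    (hfield : ∀ᶠ q in 𝓝 p, A q (X q) = -η q.2) (a b : E) :
    fderiv ℝ A p (1, X p) a b + A p (fderiv ℝ X p (0, a)) b + A p a (fderiv ℝ X p (0, b)) = 0 := by
  have hcontract : ∀ a b, fderiv ℝ A p (0, a) (X p) b + A p (fderiv ℝ X p (0, a)) b =
      -fderiv ℝ η p.2 a b := fun a b => by
    have hAX := hA.hasFDerivAt.clm_apply hX.hasFDerivAt
    have hη' : HasFDerivAt (fun q : ℝ × E => -η q.2) _ p :=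
      (hη.hasFDerivAt.comp p (hasFDerivAt_snd (𝕜 := ℝ) (p := p))).neg
    have := DFunLike.congr_fun (DFunLike.congr_fun
      (hAX.unique (hη'.congr_of_eventuallyEq hfield)) (0, a)) b
    simpa [add_comm] using this
  have hsplit : fderiv ℝ A p (1, X p) = fderiv ℝ A p (1, 0) + fderiv ℝ A p (0, X p) := by
    rw [← map_add, Prod.mk_add_mk, add_zero, zero_add]
  rw [hsplit, htime, hskew a]
  simp only [add_apply, extDeriv₁_apply]
  linear_combination hcontract a b - hcontract b a + hclosed (X p) a b

theorem pullback₂_flow_eq [CompleteSpace E] {A : ℝ × E → E →L[ℝ] E →L[ℝ] ℝ}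
    (hA : Differentiable ℝ A) {X : C(ℝ × E, E)} (hX : ContDiff ℝ 1 X) {Γ : E → C(I, E)} {x : E}
    (hΓ : DifferentiableAt ℝ Γ x)
    (hflow : ∀ᶠ y in 𝓝 x, Γ y = constPath E y + primitive E (superposition X (Γ y)))
    (hinv : ∀ s : I, ∀ a b, fderiv ℝ A (s, Γ x s) (1, X (s, Γ x s)) a b +
      A (s, Γ x s) (fderiv ℝ X (s, Γ x s) (0, a)) b +
      A (s, Γ x s) a (fderiv ℝ X (s, Γ x s) (0, b)) = 0) :
    pullback₂ (fun y => Γ y 1) (fun y => A (1, y)) x = A (0, x) := by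
  ext u v
  obtain ⟨y, hy0, hyΓ, hy⟩ :=
    exists_hasDerivAt_of_eq_constPath_add_primitive hflow.self_of_nhds
  obtain ⟨a, ha0, haΓ, ha⟩ :=
    exists_hasDerivAt_of_eq_constPath_add_primitive (fderiv_flow_apply hX hΓ hflow u)
  obtain ⟨b, hb0, hbΓ, hb⟩ :=
    exists_hasDerivAt_of_eq_constPath_add_primitive (fderiv_flow_apply hX hΓ hflow v)
  have hderiv : ∀ s : I, HasDerivAt (fun s => A (s, y s) (a s) (b s)) 0 s := fun s => by
    have hAy := (hA (s, y s)).hasFDerivAt.comp_hasDerivAt (s : ℝ)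
      ((hasDerivAt_id _).prodMk (hy s))
    refine ((hAy.clm_apply (ha s)).clm_apply (hb s)).congr_deriv ?_
    have := hinv s (fderiv ℝ Γ x u s) (fderiv ℝ Γ x v s)
    simpa [hyΓ, haΓ, hbΓ] using this
  have hconst := constant_of_has_deriv_right_zero
    (fun s hs => (hderiv ⟨s, hs⟩).continuousAt.continuousWithinAt)
    (fun s hs => (hderiv ⟨s, Set.Ico_subset_Icc_self hs⟩).hasDerivWithinAt) 1
    (Set.right_mem_Icc.2 zero_le_one)
  have heval : fderiv ℝ (fun y => Γ y 1) x =
      (ContinuousMap.evalCLM ℝ (1 : I) : C(I, E) →L[ℝ] E).comp (fderiv ℝ Γ x) :=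
    ((ContinuousMap.evalCLM ℝ (1 : I) : C(I, E) →L[ℝ] E).hasFDerivAt.comp x hΓ.hasFDerivAt).fderiv
  rw [hy0, ha0, hb0] at hconst
  simpa [pullback₂_apply, heval, ← hyΓ, ← haΓ, ← hbΓ] using hconst

omit [NormedSpace ℝ E] in
theorem eventually_forall_unitInterval_of_nhdsSet {Γ : E → C(I, E)} (hΓ : ContinuousAt Γ 0)
    (hΓ0 : Γ 0 = 0) {p : ℝ × E → Prop} (hp : ∀ᶠ q in 𝓝ˢ (Set.univ ×ˢ {0}), p q) :
    ∀ᶠ x in 𝓝 0, ∀ s : I, p (s, Γ x s) := by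
  suffices h : ∀ᶠ x in 𝓝 0, ∀ s ∈ (Set.univ : Set I), p (s, Γ x s) by simpa using h
  refine isCompact_univ.eventually_forall_of_forall_eventually fun s _ => ?_
  have hcont : ContinuousAt (fun z : E × I => ((z.2 : ℝ), Γ z.1 z.2)) (0, s) := by
    have hΓz : ContinuousAt (fun z : E × I => Γ z.1) (0, s) := hΓ.comp_of_eq continuousAt_fst rfl
    exact (continuous_subtype_val.continuousAt.comp continuousAt_snd).prodMk
      (hΓz.eval continuousAt_snd)
  refine hcont.eventually (eventually_nhdsSet_iff_forall.1 hp _ ?_)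
  simp [hΓ0]

/-- The linear path of 2-forms from `A₀` to `A₁`, as a function of time and position, along which
Moser's method deforms `A₀` into `A₁`. -/
def formPath (A₀ A₁ : E → E →L[ℝ] E →L[ℝ] ℝ) (p : ℝ × E) : E →L[ℝ] E →L[ℝ] ℝ :=
  A₀ p.2 + p.1 • (A₁ p.2 - A₀ p.2)

theorem contDiff_formPath {A₀ A₁ : E → E →L[ℝ] E →L[ℝ] ℝ} (hA₀ : ContDiff ℝ ∞ A₀)
    (hA₁ : ContDiff ℝ ∞ A₁) : ContDiff ℝ ∞ (formPath A₀ A₁) := by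
  unfold formPath
  fun_prop

theorem fderiv_formPath_apply {A₀ A₁ : E → E →L[ℝ] E →L[ℝ] ℝ} (hA₀ : Differentiable ℝ A₀)
    (hA₁ : Differentiable ℝ A₁) (p q : ℝ × E) :
    fderiv ℝ (formPath A₀ A₁) p q = fderiv ℝ A₀ p.2 q.2 +
      (q.1 • (A₁ p.2 - A₀ p.2) + p.1 • (fderiv ℝ A₁ p.2 q.2 - fderiv ℝ A₀ p.2 q.2)) := by
  have h₀ := (hA₀ p.2).hasFDerivAt.comp p (hasFDerivAt_snd (𝕜 := ℝ) (p := p))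
  have h₁ := (hA₁ p.2).hasFDerivAt.comp p (hasFDerivAt_snd (𝕜 := ℝ) (p := p))
  have : HasFDerivAt (formPath A₀ A₁) _ p :=
    h₀.add ((hasFDerivAt_fst (𝕜 := ℝ) (p := p)).smul (h₁.sub h₀))
  rw [this.fderiv]
  simp [add_comm]

theorem moser_identity_formPath {A₀ A₁ : E → E →L[ℝ] E →L[ℝ] ℝ} (hA₀ : IsClosedGerm A₀)
    (hA₁ : IsClosedGerm A₁) {X : ℝ × E → E} {η : E → E →L[ℝ] ℝ} {p : ℝ × E}
    (hX : DifferentiableAt ℝ X p) (hη : DifferentiableAt ℝ η p.2) (hA₀p : ClosedAt A₀ p.2)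
    (hA₁p : ClosedAt A₁ p.2) (hsub : A₁ p.2 - A₀ p.2 = extDeriv₁ η p.2)
    (hfield : ∀ᶠ q in 𝓝 p, formPath A₀ A₁ q (X q) = -η q.2) (a b : E) :
    fderiv ℝ (formPath A₀ A₁) p (1, X p) a b + formPath A₀ A₁ p (fderiv ℝ X p (0, a)) b +
      formPath A₀ A₁ p a (fderiv ℝ X p (0, b)) = 0 := by
  have hderiv := fderiv_formPath_apply (hA₀.contDiff.differentiable (by simp))
    (hA₁.contDiff.differentiable (by simp)) p
  refine moser_identity ((contDiff_formPath hA₀.contDiff hA₁.contDiff).differentiable (by simp) p)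
    hX hη (fun u v => ?_) (fun u v w => ?_) ?_ hfield a b
  · simp only [formPath, add_apply, smul_apply, sub_apply, smul_eq_mul]
    rw [hA₀.skew, hA₁.skew]
    ring
  · simp only [hderiv, add_apply, smul_apply, sub_apply, smul_eq_mul]
    linear_combination (1 - p.1) * hA₀p u v w + p.1 * hA₁p u v w
  · simp [hderiv, hsub]

theorem exists_pullback₂_eq_of_sub_eq_extDeriv₁ [FiniteDimensional ℝ E]
    {A₀ A₁ : E → E →L[ℝ] E →L[ℝ] ℝ} (hA₀ : IsClosedGerm A₀) (hA₁ : IsClosedGerm A₁)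
    {η : E → E →L[ℝ] ℝ} (hη : ContDiff ℝ ∞ η) (hη0 : η 0 = 0)
    (hsub : ∀ᶠ x in 𝓝 0, A₁ x - A₀ x = extDeriv₁ η x) (hA : A₁ 0 = A₀ 0)
    (hinj : Function.Injective (A₀ 0)) :
    ∃ Ψ : E → E, SmoothNear Ψ 0 ∧ (∀ᶠ x in 𝓝 0, η x = 0 → Ψ x = x) ∧
      ∀ᶠ x in 𝓝 0, pullback₂ Ψ A₁ x = A₀ x := by
  have hAc := contDiff_formPath hA₀.contDiff hA₁.contDiff
  have hA0 : ∀ s, formPath A₀ A₁ (s, 0) = A₀ 0 := fun s => by simp [formPath, hA]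
  obtain ⟨X, hX, hXfield⟩ := exists_moser_field hAc (hη.comp contDiff_snd)
    (isClosed_univ.prod isClosed_singleton : IsClosed (Set.univ ×ˢ {0} : Set (ℝ × E)))
    (by rintro ⟨s, _⟩ ⟨-, rfl⟩; rwa [hA0])
  have hX0 : ∀ s, X (s, 0) = 0 := fun s => (hXfield.self_of_nhdsSet (s, 0) (by simp)).2 hη0
  obtain ⟨Γ, hΓ, hΓ0, hflow, hrest⟩ := exists_flow_of_rest_point (X := ⟨X, hX.continuous⟩) hX hX0
  have hbase : ∀ᶠ q in 𝓝ˢ (Set.univ ×ˢ {0} : Set (ℝ × E)),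
      ClosedAt A₀ q.2 ∧ ClosedAt A₁ q.2 ∧ A₁ q.2 - A₀ q.2 = extDeriv₁ η q.2 := by
    refine eventually_nhdsSet_iff_forall.2 ?_
    rintro ⟨s, _⟩ ⟨-, rfl⟩
    exact (continuousAt_snd (p := (s, (0 : E)))).eventually
      (hA₀.closed.and (hA₁.closed.and hsub))
  refine ⟨fun x => Γ x 1, ?_, ?_, ?_⟩
  · exact SmoothNear.comp (.of_contDiff
      (ContinuousMap.evalCLM ℝ (1 : I) : C(I, E) →L[ℝ] E).contDiff _) hΓ
  · filter_upwards [hrest, eventually_forall_unitInterval_of_nhdsSet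
      (constPath E).continuous.continuousAt (map_zero _) hXfield] with x hx hXx hηx
    simp [hx fun s => (hXx s).2 hηx]
  · filter_upwards [hΓ, hflow.eventually_nhds,
      eventually_forall_unitInterval_of_nhdsSet hΓ.continuousAt hΓ0
        (hXfield.eventually_nhdsSet.and hbase)] with x hΓx hflowx hx
    have hinv : ∀ s : I, ∀ a b, _ := fun s => moser_identity_formPath hA₀ hA₁
      (p := (s, Γ x s)) (hX.differentiable (by simp) _) (hη.differentiable (by simp) _)
      (hx s).2.1 (hx s).2.2.1 (hx s).2.2.2 ((hx s).1.mono fun q hq => hq.1)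
    have := pullback₂_flow_eq (X := ⟨X, hX.continuous⟩) (hAc.differentiable (by simp))
      (hX.of_le (by exact_mod_cast le_top)) (hΓx.differentiableAt (by simp)) hflowx hinv
    simpa [formPath] using this

end Moser

section MonomialCurves

universe u

variable {E F : Type u} [NormedAddCommGroup E] [NormedSpace ℝ E]
  [NormedAddCommGroup F] [NormedSpace ℝ F] {ι : Type*} [Fintype ι]

/-- The monomial curve with exponents `μ` in the frame `e`; the normal form of a quasi-homogeneous
curve is the case where `e` consists of the first vectors of the standard basis. -/
def monomialCurve (μ : ι → ℕ) (e : ι → E) (t : ℝ) : E := ∑ i, t ^ μ i • e i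

theorem contDiff_monomialCurve (μ : ι → ℕ) (e : ι → E) : ContDiff ℝ ∞ (monomialCurve μ e) := by
  unfold monomialCurve
  fun_prop

theorem monomialCurve_zero {μ : ι → ℕ} (hμ : ∀ i, 0 < μ i) (e : ι → E) :
    monomialCurve μ e 0 = 0 := by
  simp [monomialCurve, zero_pow (hμ _).ne']

theorem iteratedDeriv_pow_smul_zero {h : ℝ → F} {n : ℕ} (hh : ContDiffAt ℝ n h 0) (m : ℕ) :
    iteratedDeriv n (fun t => t ^ m • h t) 0 =
      if m ≤ n then (n.choose m * m.factorial : ℝ) • iteratedDeriv (n - m) h 0 else 0 := by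
  have hleibniz := iteratedDerivWithin_smul (Set.mem_univ (0 : ℝ)) uniqueDiffOn_univ
    (contDiff_id.pow m : ContDiff ℝ n fun t : ℝ => t ^ m).contDiffWithinAt hh.contDiffWithinAt
  simp only [iteratedDerivWithin_univ] at hleibniz
  refine hleibniz.trans ?_
  have hterm : ∀ i, n.choose i • iteratedDeriv i (fun t : ℝ => t ^ m) 0 •
      iteratedDeriv (n - i) h 0 =
        if m = i then (n.choose m * m.factorial : ℝ) • iteratedDeriv (n - m) h 0 else 0 :=
    fun i => by
      rw [iteratedDeriv_fun_pow_zero]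
      rcases eq_or_ne i m with rfl | hi
      · simp only [if_true, mul_smul, Nat.cast_smul_eq_nsmul]
      · rw [if_neg hi, if_neg hi.symm, Nat.cast_zero, zero_smul, smul_zero]
  simp only [id_eq, hterm, Finset.sum_ite_eq, Finset.mem_range, Nat.lt_succ_iff]

theorem exists_contDiff_eq_add_apply_self [CompleteSpace F] {G : E → F}
    (hG : ContDiff ℝ ∞ G) :
    ∃ g : E → E →L[ℝ] F, ContDiff ℝ ∞ g ∧ ∀ x, G x = G 0 + g x x := by
  have hDG : ContDiff ℝ ∞ fun p : ℝ × E => fderiv ℝ G (p.1 • p.2) :=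
    (hG.fderiv_right le_rfl).comp (contDiff_fst.smul contDiff_snd)
  refine ⟨fun x => ∫ t in (0 : ℝ)..1, fderiv ℝ G (t • x), contDiff_intervalIntegral_zero_one hDG,
    fun x => ?_⟩
  have hcont : Continuous fun t : ℝ => fderiv ℝ G (t • x) :=
    hDG.continuous.comp (by fun_prop : Continuous fun t : ℝ => (t, x))
  have hderiv : ∀ t ∈ Set.uIcc (0 : ℝ) 1,
      HasDerivAt (fun t : ℝ => G (t • x)) (fderiv ℝ G (t • x) x) t := fun t _ => by
    have hline : HasDerivAt (fun t : ℝ => t • x) x t := by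
      simpa using (hasDerivAt_id t).smul_const x
    exact (hG.differentiable (by simp) _).hasFDerivAt.comp_hasDerivAt t hline
  rw [ContinuousLinearMap.intervalIntegral_apply (hcont.intervalIntegrable _ _),
    intervalIntegral.integral_eq_sub_of_hasDerivAt hderiv
      ((hcont.clm_apply continuous_const).intervalIntegrable _ _)]
  simp

theorem fderiv_zero_eq_of_eq_add_apply_self {G : E → F} {g : E → E →L[ℝ] F}
    (hg : DifferentiableAt ℝ g 0) (hGg : ∀ x, G x = G 0 + g x x) : fderiv ℝ G 0 = g 0 := by
  have hderiv : HasFDerivAt (fun x => G 0 + g x x) _ 0 :=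
    (hg.hasFDerivAt.clm_apply (hasFDerivAt_id 0)).const_add (G 0)
  rw [funext hGg, hderiv.fderiv]
  ext v
  simp

theorem iteratedDeriv_comp_monomialCurve_eq_sum {μ : ι → ℕ} {e : ι → E} {G : E → F}
    {g : E → E →L[ℝ] F} (hg : ContDiff ℝ ∞ g) (hGg : ∀ x, G x = G 0 + g x x) {n : ℕ} (hn : 0 < n) :
    iteratedDeriv n (G ∘ monomialCurve μ e) 0 = ∑ i, if μ i ≤ n then
      (n.choose (μ i) * (μ i).factorial : ℝ) •
        iteratedDeriv (n - μ i) ((fun x => g x (e i)) ∘ monomialCurve μ e) 0 else 0 := by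
  have hsmooth : ∀ i, ContDiff ℝ ∞ ((fun x => g x (e i)) ∘ monomialCurve μ e) := fun i =>
    (hg.clm_apply contDiff_const).comp (contDiff_monomialCurve μ e)
  have hexpand : G ∘ monomialCurve μ e = fun t =>
      G 0 + ∑ i, t ^ μ i • ((fun x => g x (e i)) ∘ monomialCurve μ e) t := by
    funext t
    have hlin : ∀ x, g x (monomialCurve μ e t) = ∑ i, t ^ μ i • g x (e i) := fun x => by
      simp [monomialCurve]
    rw [Function.comp_apply, hGg, hlin]
    rfl
  have hnInf : (n : WithTop ℕ∞) ≤ ∞ := by exact_mod_cast le_top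
  have hterm : ∀ i, ContDiff ℝ n fun t : ℝ =>
      t ^ μ i • ((fun x => g x (e i)) ∘ monomialCurve μ e) t := fun i =>
    (contDiff_id.pow _).smul ((hsmooth i).of_le hnInf)
  rw [hexpand, iteratedDeriv_const_add hn, iteratedDeriv_fun_sum fun i _ => (hterm i).contDiffAt]
  exact Finset.sum_congr rfl fun i _ =>
    iteratedDeriv_pow_smul_zero ((hsmooth i).of_le hnInf).contDiffAt _

theorem iteratedDeriv_comp_monomialCurve_eq_zero [CompleteSpace F]
    {μ : ι → ℕ} (hμ : ∀ i, 0 < μ i) (e : ι → E) {G : E → F} (hG : ContDiff ℝ ∞ G) {n : ℕ}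
    (hn : n ∉ AddSubmonoid.closure (Set.range μ)) :
    iteratedDeriv n (G ∘ monomialCurve μ e) 0 = 0 := by
  induction n using Nat.strong_induction_on generalizing G with
  | _ n ih =>
    obtain ⟨g, hg, hGg⟩ := exists_contDiff_eq_add_apply_self hG
    have hn0 : 0 < n := Nat.pos_of_ne_zero fun h => hn (h ▸ zero_mem _)
    rw [iteratedDeriv_comp_monomialCurve_eq_sum hg hGg hn0]
    refine Finset.sum_eq_zero fun i _ => ?_
    split_ifs with hi
    · rw [ih (n - μ i) (Nat.sub_lt hn0 (hμ i)) (hg.clm_apply contDiff_const), smul_zero]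
      refine fun h => hn ?_
      rw [← Nat.sub_add_cancel hi]
      exact add_mem h (AddSubmonoid.subset_closure (Set.mem_range_self i))
    · rfl

theorem sub_notMem_closure_range_of_linIndepNonneg {k : ℕ} {μ : Fin k → ℕ} (hμ : ∀ i, 0 < μ i)
    (hind : LinIndepNonneg μ) {i j : Fin k} (hij : i ≠ j) (hle : μ i ≤ μ j) :
    μ j - μ i ∉ AddSubmonoid.closure (Set.range μ) := by
  rw [AddSubmonoid.mem_closure_range_iff_of_fintype]
  rintro ⟨a, ha⟩
  simp only [smul_eq_mul] at ha
  have haj : a j = 0 := by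
    by_contra hne
    have h₁ : a j * μ j ≤ ∑ l, a l * μ l :=
      Finset.single_le_sum (f := fun l => a l * μ l) (fun _ _ => Nat.zero_le _) (Finset.mem_univ j)
    have h₂ := Nat.le_mul_of_pos_left (μ j) (Nat.pos_of_ne_zero hne)
    have := hμ i
    omega
  refine hind j (fun l => a l + if l = i then 1 else 0) ?_
  have hmem : i ∈ Finset.univ.erase j := Finset.mem_erase.2 ⟨hij, Finset.mem_univ i⟩
  have hsum := Finset.add_sum_erase Finset.univ (fun l => a l * μ l) (Finset.mem_univ j)
  simp only [haj, zero_mul, zero_add] at hsum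
  simp only [add_mul, ite_mul, one_mul, zero_mul, Finset.sum_add_distrib, Finset.sum_ite_eq',
    if_pos hmem]
  omega

/-- By independence, `t ^ μ j` occurs in `G (Σ t ^ μ i • e i)` only through the linear part
of `G`. -/
theorem fderiv_zero_apply_eq_zero_of_monomialCurve [CompleteSpace F]
    {k : ℕ} {μ : Fin k → ℕ} (hμ : ∀ i, 0 < μ i) (hind : LinIndepNonneg μ) {e : Fin k → E}
    {G : E → F} (hG : ContDiff ℝ ∞ G) (hzero : ∀ᶠ t in 𝓝 0, G (monomialCurve μ e t) = 0)
    (j : Fin k) : fderiv ℝ G 0 (e j) = 0 := by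
  obtain ⟨g, hg, hGg⟩ := exists_contDiff_eq_add_apply_self hG
  have hcoeff : iteratedDeriv (μ j) (G ∘ monomialCurve μ e) 0 = 0 := by
    have : G ∘ monomialCurve μ e =ᶠ[𝓝 0] fun _ => 0 := hzero
    rw [this.iteratedDeriv_eq, iteratedDeriv_fun_const_zero]
  rw [iteratedDeriv_comp_monomialCurve_eq_sum hg hGg (hμ j), Finset.sum_eq_single j] at hcoeff
  · rw [fderiv_zero_eq_of_eq_add_apply_self (hg.differentiable (by simp) 0) hGg]
    simpa [monomialCurve_zero hμ, (Nat.factorial_pos _).ne'] using hcoeff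
  · intro i _ hij
    split_ifs with hle
    · rw [iteratedDeriv_comp_monomialCurve_eq_zero hμ e (hg.clm_apply contDiff_const)
        (sub_notMem_closure_range_of_linIndepNonneg hμ hind hij hle), smul_zero]
    · rfl
  · simp

end MonomialCurves

section WittExtension

variable {K V V' : Type*} [Field K] [AddCommGroup V] [Module K V] [AddCommGroup V'] [Module K V']
  {A : LinearMap.BilinForm K V} {B : LinearMap.BilinForm K V'} {L : V →ₗ[K] V'} {W : Submodule K V}
  {v : V}

/-- `L` restricts to an injective isometry from `(W, A)` to `(V', B)`, the datum that Witt's theorem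
extends to the whole space. On a proper subspace `W` injectivity does not follow from the isometry
condition, as `A` may degenerate there. -/
structure IsIsometryOn (A : LinearMap.BilinForm K V) (B : LinearMap.BilinForm K V')
    (L : V →ₗ[K] V') (W : Submodule K V) : Prop where
  disjoint_ker : Disjoint W (LinearMap.ker L)
  map_apply : ∀ w ∈ W, ∀ w' ∈ W, B (L w) (L w') = A w w'

theorem IsIsometryOn.injective_domRestrict (hL : IsIsometryOn A B L W) :
    Function.Injective (L.domRestrict W) :=
  LinearMap.injective_domRestrict_iff.2 hL.disjoint_ker

theorem IsIsometryOn.exists_apply_eq [FiniteDimensional K V'] (hL : IsIsometryOn A B L W)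
    (hB : B.Nondegenerate) (v : V) : ∃ v' : V', ∀ w ∈ W, B v' (L w) = A v w := by
  obtain ⟨g, hg⟩ := LinearMap.exists_leftInverse_of_injective _
    (LinearMap.ker_eq_bot.2 hL.injective_domRestrict)
  obtain ⟨v', hv'⟩ := (B.toDual hB).surjective (((A v).comp W.subtype).comp g)
  refine ⟨v', fun w hw => ?_⟩
  have hgw : g (L w) = ⟨w, hw⟩ := LinearMap.congr_fun hg ⟨w, hw⟩
  rw [← LinearMap.BilinForm.toDual_def hB, hv']
  simp [hgw]

theorem IsIsometryOn.not_orthogonal_le_map [FiniteDimensional K V] [FiniteDimensional K V']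
    (hL : IsIsometryOn A B L W) (hA : A.Nondegenerate) (hB : B.Nondegenerate)
    (hV : Module.finrank K V ≤ Module.finrank K V') (hv : v ∉ W) (hvA : v ∈ A.orthogonal W) :
    ¬B.orthogonal (W.map L) ≤ W.map L := by
  intro hle
  have hsub : B.orthogonal (W.map L) ≤ (W ⊓ A.orthogonal W).map L := by
    intro u hu
    obtain ⟨w, hw, rfl⟩ := hle hu
    refine ⟨w, ⟨hw, LinearMap.BilinForm.mem_orthogonal_iff.2 fun w' hw' => ?_⟩, rfl⟩
    exact (hL.map_apply w' hw' w hw).symm.trans (hu _ ⟨w', hw', rfl⟩)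
  have hlt : W ⊓ A.orthogonal W < A.orthogonal W :=
    inf_le_right.lt_of_ne fun h => hv (inf_eq_right.1 h hvA)
  have hmap : Module.finrank K (W.map L) = Module.finrank K W := by
    rw [← LinearMap.range_domRestrict, LinearMap.finrank_range_of_inj hL.injective_domRestrict]
  have hdim := (Submodule.finrank_mono hsub).trans (Submodule.finrank_map_le L _)
  have hdim_lt := Submodule.finrank_lt_finrank_of_lt hlt
  rw [LinearMap.BilinForm.finrank_orthogonal hB] at hdim
  rw [LinearMap.BilinForm.finrank_orthogonal hA] at hdim_lt
  omega

theorem IsIsometryOn.exists_notMem_apply_eq [FiniteDimensional K V] [FiniteDimensional K V']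
    (hL : IsIsometryOn A B L W) (hA : A.Nondegenerate) (hB : B.Nondegenerate) (hA' : A.IsAlt)
    (hB' : B.IsAlt) (hV : Module.finrank K V ≤ Module.finrank K V') (hv : v ∉ W) :
    ∃ v' ∉ W.map L, ∀ w ∈ W, B v' (L w) = A v w := by
  obtain ⟨v₀, hv₀⟩ := hL.exists_apply_eq hB v
  by_cases hmem : v₀ ∈ W.map L
  · obtain ⟨w₀, hw₀, rfl⟩ := hmem
    have hsub : v - w₀ ∈ A.orthogonal W := LinearMap.BilinForm.mem_orthogonal_iff.2 fun w hw => by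
      rw [← hA'.neg_eq, map_sub, LinearMap.sub_apply, ← hv₀ w hw, hL.map_apply w₀ hw₀ w hw,
        sub_self, neg_zero]
    have hsub_notMem : v - w₀ ∉ W := fun h => hv (by simpa using W.add_mem h hw₀)
    obtain ⟨u, hu, huW⟩ := SetLike.not_le_iff_exists.1
      (hL.not_orthogonal_le_map hA hB hV hsub_notMem hsub)
    refine ⟨L w₀ + u, fun h => huW ?_, fun w hw => ?_⟩
    · simpa using (W.map L).sub_mem h (Submodule.mem_map_of_mem hw₀)
    · rw [map_add, LinearMap.add_apply, hv₀ w hw, ← hB'.neg_eq,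
        LinearMap.BilinForm.mem_orthogonal_iff.1 hu (L w) ⟨w, hw, rfl⟩, neg_zero, add_zero]
  · exact ⟨v₀, hmem, hv₀⟩

theorem IsIsometryOn.sup_span_singleton (hL : IsIsometryOn A B L W) (hA' : A.IsAlt)
    (hB' : B.IsAlt) (hmem : L v ∉ W.map L) (hv : ∀ w ∈ W, B (L v) (L w) = A v w) :
    IsIsometryOn A B L (W ⊔ Submodule.span K {v}) := by
  have hdecomp : ∀ x ∈ W ⊔ Submodule.span K {v}, ∃ w ∈ W, ∃ a : K, w + a • v = x := fun x hx => by
    obtain ⟨w, hw, y, hy, rfl⟩ := Submodule.mem_sup.1 hx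
    obtain ⟨a, rfl⟩ := Submodule.mem_span_singleton.1 hy
    exact ⟨w, hw, a, rfl⟩
  constructor
  · rw [LinearMap.disjoint_ker]
    intro x hx hx0
    obtain ⟨w, hw, a, rfl⟩ := hdecomp x hx
    have ha : a = 0 := by
      by_contra ha
      refine hmem (((W.map L).smul_mem_iff ha).1 ⟨-w, W.neg_mem hw, ?_⟩)
      rw [map_add, map_smul] at hx0
      rw [map_neg, neg_eq_of_add_eq_zero_right hx0]
    subst ha
    rw [zero_smul, add_zero] at hx0 ⊢
    exact LinearMap.disjoint_ker.1 hL.disjoint_ker w hw hx0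
  · intro x hx y hy
    obtain ⟨w, hw, a, rfl⟩ := hdecomp x hx
    obtain ⟨w', hw', a', rfl⟩ := hdecomp y hy
    simp only [map_add, map_smul, LinearMap.add_apply, LinearMap.smul_apply,
      hL.map_apply w hw w' hw', hv w' hw', ← hB'.neg_eq (L v) (L w), hv w hw, hA'.self_eq_zero,
      hB'.self_eq_zero, ← hA'.neg_eq v w]

theorem IsIsometryOn.exists_extension [FiniteDimensional K V] [FiniteDimensional K V']
    (hL : IsIsometryOn A B L W) (hA : A.Nondegenerate) (hB : B.Nondegenerate) (hA' : A.IsAlt)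
    (hB' : B.IsAlt) (hV : Module.finrank K V ≤ Module.finrank K V') :
    ∃ L' : V →ₗ[K] V', (∀ w ∈ W, L' w = L w) ∧ ∀ u v, B (L' u) (L' v) = A u v := by
  induction W using WellFoundedGT.induction generalizing L with
  | ind W ih =>
  by_cases hW : W = ⊤
  · subst hW
    exact ⟨L, fun _ _ => rfl, fun u v => hL.map_apply u trivial v trivial⟩
  obtain ⟨v, hv⟩ : ∃ v, v ∉ W := by simpa [Submodule.eq_top_iff'] using hW
  obtain ⟨v', hv', hv'A⟩ := hL.exists_notMem_apply_eq hA hB hA' hB' hV hv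
  obtain ⟨f, hfv, hfW⟩ := Submodule.exists_le_ker_of_notMem hv
  let L₁ : V →ₗ[K] V' := L + ((f v)⁻¹ • f).smulRight (v' - L v)
  have hL₁W : ∀ w ∈ W, L₁ w = L w := fun w hw => by simp [L₁, LinearMap.mem_ker.1 (hfW hw)]
  have hL₁v : L₁ v = v' := by simp [L₁, hfv]
  have hmap : W.map L₁ = W.map L := Submodule.ext fun y =>
    exists_congr fun w => and_congr_right fun hw => by rw [hL₁W w hw]
  have hL₁ : IsIsometryOn A B L₁ W := by
    constructor
    · rw [LinearMap.disjoint_ker]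
      exact fun w hw h => LinearMap.disjoint_ker.1 hL.disjoint_ker w hw (hL₁W w hw ▸ h)
    · exact fun w hw w' hw' => by rw [hL₁W w hw, hL₁W w' hw', hL.map_apply w hw w' hw']
  have hL₁' : IsIsometryOn A B L₁ (W ⊔ Submodule.span K {v}) :=
    hL₁.sup_span_singleton hA' hB' (by rwa [hL₁v, hmap]) fun w hw => by
      rw [hL₁v, hL₁W w hw, hv'A w hw]
  obtain ⟨L', hL'W, hL'⟩ := ih _ (Submodule.lt_sup_iff_notMem.2 hv) hL₁'
  exact ⟨L', fun w hw => (hL'W w (Submodule.mem_sup_left hw)).trans (hL₁W w hw), hL'⟩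

theorem exists_isometry_eqOn [FiniteDimensional K V] {A B : LinearMap.BilinForm K V}
    (hA : A.Nondegenerate) (hB : B.Nondegenerate) (hA' : A.IsAlt) (hB' : B.IsAlt)
    (hW : ∀ w ∈ W, ∀ w' ∈ W, B w w' = A w w') :
    ∃ L : V →ₗ[K] V, (∀ w ∈ W, L w = w) ∧ ∀ u v, B (L u) (L v) = A u v :=
  IsIsometryOn.exists_extension (L := LinearMap.id) ⟨by simp, hW⟩ hA hB hA' hB' le_rfl

end WittExtension

section RelativePoincare

universe u

variable {E : Type u} [NormedAddCommGroup E] [NormedSpace ℝ E]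

theorem eventually_forall_Icc_of_homotopy_const {X Y : Type*} [TopologicalSpace X]
    [TopologicalSpace Y] {H : ℝ × X → Y} (hH : Continuous H) {x : X} {y : Y}
    (hHx : ∀ t, H (t, x) = y) {p : Y → Prop} (hp : ∀ᶠ z in 𝓝 y, p z) :
    ∀ᶠ z in 𝓝 x, ∀ t ∈ Set.Icc (0 : ℝ) 1, p (H (t, z)) := by
  refine isCompact_Icc.eventually_forall_of_forall_eventually fun t _ => ?_
  have hlim : Tendsto (H ∘ Prod.swap) (𝓝 (x, t)) (𝓝 y) :=
    hHx t ▸ (hH.comp continuous_swap).tendsto (x, t)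
  exact hlim.eventually hp

theorem exists_dilation_monomialCurve [FiniteDimensional ℝ E] {ι : Type*} [Fintype ι] {μ : ι → ℕ}
    (hμ : ∀ i, 0 < μ i) {e : ι → E} (he : LinearIndependent ℝ e) :
    ∃ D : ℝ × E → E, ContDiff ℝ ∞ D ∧ (∀ x, D (0, x) = 0) ∧ (∀ x, D (1, x) = x) ∧
      (∀ t, D (t, 0) = 0) ∧
      ∀ t s, D (t, monomialCurve μ e s) = monomialCurve μ e (t * s) := by
  obtain ⟨π, hπ⟩ := LinearMap.exists_leftInverse_of_injective _
    (LinearMap.ker_eq_bot.2 he.fintypeLinearCombination_injective)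
  have hπγ : ∀ s i, π (monomialCurve μ e s) i = s ^ μ i := fun s i =>
    congrFun (LinearMap.congr_fun hπ fun i => s ^ μ i) i
  refine ⟨fun p => p.1 • (p.2 - ∑ i, π p.2 i • e i) + ∑ i, (p.1 ^ μ i * π p.2 i) • e i,
    ?_, ?_, ?_, ?_, ?_⟩
  · have hπs : ContDiff ℝ ∞ π := π.toContinuousLinearMap.contDiff
    fun_prop
  · simp [(hμ _).ne']
  · simp
  · simp
  · intro t s
    simp only [hπγ]
    simp [monomialCurve, mul_pow]

theorem exists_eq_extDeriv₁_of_dilation {γ : ℝ → E} {D : ℝ × E → E}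
    (hD : ContDiff ℝ ∞ D) (hD0 : ∀ x, D (0, x) = 0) (hD1 : ∀ x, D (1, x) = x)
    (hDt : ∀ t, D (t, 0) = 0) (hDγ : ∀ t s, D (t, γ s) = γ (t * s))
    {α : E → E →L[ℝ] E →L[ℝ] ℝ} (hα : IsClosedGerm α) (hαγ : ∀ᶠ s in 𝓝 0, α (γ s) = 0) :
    ∃ κ : E → E →L[ℝ] ℝ, ContDiff ℝ ∞ κ ∧ (∀ᶠ x in 𝓝 0, α x = extDeriv₁ κ x) ∧
      ∀ᶠ s in 𝓝 0, κ (γ s) = 0 := by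
  refine ⟨homotopyOperator D α, contDiff_homotopyOperator hD hα.contDiff, ?_, ?_⟩
  · filter_upwards [eventually_forall_Icc_of_homotopy_const hD.continuous hDt hα.closed] with x hx
    rw [extDeriv₁_homotopyOperator hD hα.contDiff hα.skew hx]
    ext u v
    simp [hD0, hD1]
  · filter_upwards [eventually_forall_Icc_of_homotopy_const (p := fun s => α (γ s) = 0)
      continuous_mul mul_zero hαγ] with s hs
    refine homotopyOperator_eq_zero fun t ht v => ?_
    rw [pullback₂_apply, hDγ, hs t ht, zero_apply, zero_apply]

theorem exists_pullback₂_sub_eq_extDeriv₁ {A : E → E →L[ℝ] E →L[ℝ] ℝ} (hA : IsClosedGerm A)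
    (L : E →L[ℝ] E) :
    ∃ κ : E → E →L[ℝ] ℝ, ContDiff ℝ ∞ κ ∧
      (∀ᶠ x in 𝓝 0, pullback₂ L A x - A x = extDeriv₁ κ x) ∧ ∀ x, L x = x → κ x = 0 := by
  let H : ℝ × E → E := fun p => p.2 + p.1 • (L p.2 - p.2)
  have hH : ContDiff ℝ ∞ H := by fun_prop
  refine ⟨homotopyOperator H A, contDiff_homotopyOperator hH hA.contDiff, ?_, fun x hx => ?_⟩
  · filter_upwards [eventually_forall_Icc_of_homotopy_const hH.continuous
      (fun t => by simp [H]) hA.closed] with x hx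
    rw [extDeriv₁_homotopyOperator hH hA.contDiff hA.skew hx]
    ext u v
    simp [H]
  · refine homotopyOperator_eq_zero fun t _ v => ?_
    have hconst : HasDerivAt (fun s => H (s, x)) 0 t := by
      simpa only [H, hx, sub_self, smul_zero, add_zero] using hasDerivAt_const t x
    have hpath := (hH.differentiable (by simp) (t, x)).hasFDerivAt.comp_hasDerivAt t
      ((hasDerivAt_id t).prodMk (hasDerivAt_const t x))
    rw [pullback₂_apply, hpath.unique hconst, map_zero, zero_apply]

end RelativePoincare

section MonomialCurveForms

universe u

variable {E : Type u} [NormedAddCommGroup E] [NormedSpace ℝ E]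

theorem exists_continuousLinearMap_isometry [FiniteDimensional ℝ E] {B₀ B₁ : E →L[ℝ] E →L[ℝ] ℝ}
    (hskew₀ : ∀ u v, B₀ u v = -B₀ v u) (hskew₁ : ∀ u v, B₁ u v = -B₁ v u)
    (hinj₀ : Function.Injective B₀) (hinj₁ : Function.Injective B₁) {W : Submodule ℝ E}
    (hW : ∀ w ∈ W, ∀ w' ∈ W, B₁ w w' = B₀ w w') :
    ∃ L : E →L[ℝ] E, (∀ w ∈ W, L w = w) ∧ ∀ u v, B₁ (L u) (L v) = B₀ u v := by
  have halt : ∀ B : E →L[ℝ] E →L[ℝ] ℝ, (∀ u v, B u v = -B v u) → B.toBilinForm.IsAlt :=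
    fun B hB u => self_eq_neg.1 (hB u u)
  have hnondeg : ∀ B : E →L[ℝ] E →L[ℝ] ℝ, (∀ u v, B u v = -B v u) → Function.Injective B →
      B.toBilinForm.Nondegenerate := fun B hB hinj => by
    have hleft : ∀ u, (∀ v, B u v = 0) → u = 0 := fun u hu =>
      (injective_iff_map_eq_zero B).1 hinj u (ContinuousLinearMap.ext hu)
    exact ⟨hleft, fun u hu => hleft u fun v => by rw [hB]; exact neg_eq_zero.2 (hu v)⟩
  obtain ⟨L, hLW, hL⟩ := exists_isometry_eqOn (hnondeg B₀ hskew₀ hinj₀)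
    (hnondeg B₁ hskew₁ hinj₁) (halt B₀ hskew₀) (halt B₁ hskew₁) hW
  exact ⟨L.toContinuousLinearMap, hLW, hL⟩

variable {k : ℕ} {μ : Fin k → ℕ} {e : Fin k → E} {A₀ A₁ : E → E →L[ℝ] E →L[ℝ] ℝ}

theorem exists_sub_eq_extDeriv₁_of_monomialCurve [FiniteDimensional ℝ E] (hμ : ∀ i, 0 < μ i)
    (he : LinearIndependent ℝ e) (hA₀ : IsClosedGerm A₀) (hA₁ : IsClosedGerm A₁)
    {α : E → E →L[ℝ] E →L[ℝ] ℝ} {β : E → E →L[ℝ] ℝ} (hα : ContDiff ℝ ∞ α)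
    (hα_skew : ∀ x u v, α x u v = -α x v u) (hβ : ContDiff ℝ ∞ β)
    (hsub : ∀ᶠ x in 𝓝 0, A₁ x - A₀ x = α x + extDeriv₁ β x)
    (hαγ : ∀ᶠ t in 𝓝 0, α (monomialCurve μ e t) = 0)
    (hβγ : ∀ᶠ t in 𝓝 0, β (monomialCurve μ e t) = 0) :
    ∃ η : E → E →L[ℝ] ℝ, ContDiff ℝ ∞ η ∧ (∀ᶠ x in 𝓝 0, A₁ x - A₀ x = extDeriv₁ η x) ∧
      ∀ᶠ t in 𝓝 0, η (monomialCurve μ e t) = 0 := by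
  have hα_closed : ∀ᶠ x in 𝓝 0, ClosedAt α x := by
    filter_upwards [hA₀.closed, hA₁.closed, hsub.eventually_nhds] with x h₀ h₁ hx
    have hd : ∀ {A : E → E →L[ℝ] E →L[ℝ] ℝ}, ContDiff ℝ ∞ A → DifferentiableAt ℝ A x :=
      fun hA => hA.differentiable (by simp) x
    refine ((h₁.sub h₀ (hd hA₁.contDiff) (hd hA₀.contDiff)).sub (closedAt_extDeriv₁ hβ x)
      ((hd hA₁.contDiff).sub (hd hA₀.contDiff)) (hd (contDiff_extDeriv₁ hβ))).congr ?_
    filter_upwards [hx] with y hy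
    rw [hy, add_sub_cancel_right]
  obtain ⟨D, hD, hD0, hD1, hDt, hDγ⟩ := exists_dilation_monomialCurve hμ he
  obtain ⟨κ, hκ, hακ, hκγ⟩ := exists_eq_extDeriv₁_of_dilation hD hD0 hD1 hDt hDγ
    ⟨hα, hα_skew, hα_closed⟩ hαγ
  refine ⟨fun x => κ x + β x, hκ.add hβ, ?_, ?_⟩
  · filter_upwards [hsub, hακ] with x hx hαx
    rw [extDeriv₁_add (hκ.differentiable (by simp) x) (hβ.differentiable (by simp) x), hx, hαx]
  · filter_upwards [hκγ, hβγ] with t hκt hβt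
    rw [hκt, hβt, add_zero]

theorem eq_on_span_of_sub_eq_extDeriv₁ (hμ : ∀ i, 0 < μ i) (hind : LinIndepNonneg μ)
    {η : E → E →L[ℝ] ℝ} (hη : ContDiff ℝ ∞ η) (hsub : A₁ 0 - A₀ 0 = extDeriv₁ η 0)
    (hηγ : ∀ᶠ t in 𝓝 0, η (monomialCurve μ e t) = 0) :
    ∀ w ∈ Submodule.span ℝ (Set.range e), ∀ w' ∈ Submodule.span ℝ (Set.range e),
      A₁ 0 w w' = A₀ 0 w w' := by
  have hspan : Submodule.span ℝ (Set.range e) ≤ (fderiv ℝ η 0).ker :=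
    Submodule.span_le.2 <| Set.range_subset_iff.2
      (fderiv_zero_apply_eq_zero_of_monomialCurve hμ hind hη hηγ)
  intro w hw w' hw'
  have hker : ∀ w ∈ Submodule.span ℝ (Set.range e), fderiv ℝ η 0 w = 0 := fun w hw => hspan hw
  have heval := congrArg (fun B : E →L[ℝ] E →L[ℝ] ℝ => B w w') hsub
  simpa [hker w hw, hker w' hw', sub_eq_zero] using heval

theorem exists_pullback₂_eq_of_monomialCurve [FiniteDimensional ℝ E] (hμ : ∀ i, 0 < μ i)
    (hind : LinIndepNonneg μ) (hA₀ : IsClosedGerm A₀) (hA₁ : IsClosedGerm A₁)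
    (hinj₀ : Function.Injective (A₀ 0)) (hinj₁ : Function.Injective (A₁ 0))
    {η : E → E →L[ℝ] ℝ} (hη : ContDiff ℝ ∞ η)
    (hsub : ∀ᶠ x in 𝓝 0, A₁ x - A₀ x = extDeriv₁ η x)
    (hηγ : ∀ᶠ t in 𝓝 0, η (monomialCurve μ e t) = 0) :
    ∃ Ψ : E → E, SmoothNear Ψ 0 ∧
      (∀ᶠ t in 𝓝 0, Ψ (monomialCurve μ e t) = monomialCurve μ e t) ∧
      ∀ᶠ x in 𝓝 0, pullback₂ Ψ A₁ x = A₀ x := by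
  have hγ0 : monomialCurve μ e 0 = 0 := monomialCurve_zero hμ e
  have hγ : Tendsto (monomialCurve μ e) (𝓝 0) (𝓝 0) := by
    simpa only [hγ0] using (contDiff_monomialCurve μ e).continuous.tendsto 0
  obtain ⟨L, hLW, hL⟩ := exists_continuousLinearMap_isometry (hA₀.skew 0) (hA₁.skew 0) hinj₀ hinj₁
    (eq_on_span_of_sub_eq_extDeriv₁ hμ hind hη hsub.self_of_nhds hηγ)
  have hLγ : ∀ t, L (monomialCurve μ e t) = monomialCurve μ e t := fun t =>
    hLW _ (Submodule.sum_mem _ fun i _ =>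
      Submodule.smul_mem _ _ (Submodule.subset_span (Set.mem_range_self i)))
  obtain ⟨κ, hκ, hLκ, hκL⟩ := exists_pullback₂_sub_eq_extDeriv₁ hA₁ L
  have hηκ : ∀ᶠ t in 𝓝 0, η (monomialCurve μ e t) + κ (monomialCurve μ e t) = 0 := by
    filter_upwards [hηγ] with t ht
    rw [ht, hκL _ (hLγ t), add_zero]
  have hsub' : ∀ᶠ x in 𝓝 0, pullback₂ L A₁ x - A₀ x = extDeriv₁ (fun y => η y + κ y) x := by
    filter_upwards [hsub, hLκ] with x hx hLx
    rw [extDeriv₁_add (hη.differentiable (by simp) x) (hκ.differentiable (by simp) x), ← hx, ← hLx]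
    abel
  have hL0 : pullback₂ L A₁ 0 = A₀ 0 := by
    ext u v
    simp [hL]
  obtain ⟨Ψ, hΨ, hΨη, hΨA⟩ := exists_pullback₂_eq_of_sub_eq_extDeriv₁ hA₀
    (isClosedGerm_pullback₂ L.contDiff (map_zero L) hA₁) (hη.add hκ)
    (by simpa only [hγ0] using hηκ.self_of_nhds) hsub' hL0 hinj₀
  refine ⟨L ∘ Ψ, SmoothNear.comp (.of_contDiff L.contDiff _) hΨ, ?_, ?_⟩
  · filter_upwards [hγ.eventually hΨη, hηκ] with t hΨt ht
    rw [Function.comp_apply, hΨt ht, hLγ]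
  · filter_upwards [hΨA, hΨ.eventually] with x hx hΨx
    rw [pullback₂_comp A₁ L.differentiableAt hΨx.differentiableAt, hx]

end MonomialCurveForms

section SmoothRepresentatives

variable {m : ℕ}

theorem eq_sum_mul_apply_single {L : (Fin m → ℝ) → ℝ}
    (hL : ∀ u₁ u₂ (c : ℝ), L (u₁ + c • u₂) = L u₁ + c * L u₂) (u : Fin m → ℝ) :
    L u = ∑ i, u i * L (Pi.single i 1) := by
  have hadd : ∀ a b, L (a + b) = L a + L b := fun a b => by simpa using hL a b 1
  have hzero : L 0 = 0 := by simpa using hadd 0 0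
  have hsmul : ∀ (c : ℝ) a, L (c • a) = c • L a := fun c a => by simpa [hzero] using hL 0 a c
  calc L u = IsLinearMap.mk' L ⟨hadd, hsmul⟩ (∑ i, u i • Pi.single i 1) := by
        rw [← pi_eq_sum_univ' u, IsLinearMap.mk'_apply]
    _ = ∑ i, u i * L (Pi.single i 1) := by
        simp only [map_sum, map_smul, IsLinearMap.mk'_apply, smul_eq_mul]

theorem IsForm1.exists_contDiff {β : Form1 m} (hβ : IsForm1 m β) :
    ∃ B : (Fin m → ℝ) → (Fin m → ℝ) →L[ℝ] ℝ, ContDiff ℝ ∞ B ∧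
      ∀ᶠ x in 𝓝 0, ∀ u, B x u = β x u := by
  choose c hc hcβ using fun i : Fin m =>
    (smoothNear_iff_contDiffOn.2 (hβ.2 (Pi.single i 1))).exists_contDiff
  refine ⟨fun x => ∑ i, c i x • ContinuousLinearMap.proj i, by fun_prop, ?_⟩
  filter_upwards [eventually_all.2 hcβ] with x hx u
  rw [eq_sum_mul_apply_single (hβ.1 x) u]
  simp [hx, mul_comm]

theorem IsForm2.exists_contDiff {σ : Form2 m} (hσ : IsForm2 m σ) :
    ∃ A : (Fin m → ℝ) → (Fin m → ℝ) →L[ℝ] (Fin m → ℝ) →L[ℝ] ℝ, ContDiff ℝ ∞ A ∧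
      (∀ x u v, A x u v = -A x v u) ∧ ∀ᶠ x in 𝓝 0, ∀ u v, A x u v = σ x u v := by
  obtain ⟨hlin, hskew, hsmooth⟩ := hσ
  have hrow : ∀ v, IsForm1 m fun x u => σ x u v := fun v =>
    ⟨fun x u₁ u₂ c => hlin x u₁ u₂ v c, fun u => hsmooth u v⟩
  choose B hB hBσ using fun j : Fin m => (hrow (Pi.single j 1)).exists_contDiff
  let A : (Fin m → ℝ) → (Fin m → ℝ) →L[ℝ] (Fin m → ℝ) →L[ℝ] ℝ := fun x =>
    ∑ j, (2⁻¹ : ℝ) • ((B j x).smulRight (ContinuousLinearMap.proj j) -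
      (ContinuousLinearMap.proj j : (Fin m → ℝ) →L[ℝ] ℝ).smulRight (B j x))
  have hA : ∀ x u v, A x u v = ∑ j, 2⁻¹ * (B j x u * v j - u j * B j x v) := fun x u v => by
    simp [A]
  refine ⟨A, ?_, fun x u v => ?_, ?_⟩
  · simp only [contDiff_clm_apply_iff, hA]
    intro u v
    have hBu : ∀ j w, ContDiff ℝ ∞ fun x => B j x w := fun j w =>
      (hB j).clm_apply contDiff_const
    fun_prop
  · rw [hA, hA, ← Finset.sum_neg_distrib]
    exact Finset.sum_congr rfl fun j _ => by ring
  · filter_upwards [eventually_all.2 hBσ] with x hx u v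
    have hexp : ∀ a b, σ x a b = ∑ j, σ x a (Pi.single j 1) * b j := fun a b => by
      have hlin_right : ∀ u₁ u₂ (c : ℝ), σ x a (u₁ + c • u₂) = σ x a u₁ + c * σ x a u₂ :=
        fun u₁ u₂ c => by rw [hskew x a, hlin, hskew x a u₁, hskew x a u₂]; ring
      simpa only [mul_comm] using eq_sum_mul_apply_single hlin_right b
    have hdouble : σ x u v = 2⁻¹ * (σ x u v - σ x v u) := by rw [hskew x v u]; ring
    rw [hA, hdouble, hexp u v, hexp v u, ← Finset.sum_sub_distrib, Finset.mul_sum]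
    exact Finset.sum_congr rfl fun j _ => by rw [hx, hx, mul_comm (u j)]

theorem Closed2.eventually_closedAt {σ : Form2 m} (hσ : Closed2 m σ)
    {A : (Fin m → ℝ) → (Fin m → ℝ) →L[ℝ] (Fin m → ℝ) →L[ℝ] ℝ} (hA : ContDiff ℝ ∞ A)
    (hAσ : ∀ᶠ x in 𝓝 0, ∀ u v, A x u v = σ x u v) : ∀ᶠ x in 𝓝 0, ClosedAt A x := by
  filter_upwards [hσ, hAσ.eventually_nhds] with x hx hAx u v w
  have hderiv : ∀ a b c, fderiv ℝ A x a b c = fderiv ℝ (fun y => σ y b c) x a := fun a b c => by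
    have hbc : (fun y => A y b c) =ᶠ[𝓝 x] fun y => σ y b c := hAx.mono fun y hy => hy b c
    rw [← hbc.fderiv_eq, fderiv_clm_apply₂ (hA.differentiable (by simp) x)]
  rw [hderiv, hderiv, hderiv]
  exact hx u v w

theorem eventually_extDeriv₁_eq_extD1 {β : Form1 m} {B : (Fin m → ℝ) → (Fin m → ℝ) →L[ℝ] ℝ}
    (hB : ContDiff ℝ ∞ B) (hBβ : ∀ᶠ x in 𝓝 0, ∀ u, B x u = β x u) :
    ∀ᶠ x in 𝓝 0, ∀ u v, extDeriv₁ B x u v = extD1 m β x u v := by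
  filter_upwards [hBβ.eventually_nhds] with x hBx u v
  have hderiv : ∀ a b, fderiv ℝ B x a b = fderiv ℝ (fun y => β y b) x a := fun a b => by
    have hb : (fun y => B y b) =ᶠ[𝓝 x] fun y => β y b := hBx.mono fun y hy => hy b
    rw [← hb.fderiv_eq, fderiv_clm_apply₁ (hB.differentiable (by simp) x)]
  rw [extDeriv₁_apply, hderiv, hderiv, extD1]

theorem IsSymplecticGerm.exists_isClosedGerm {σ : Form2 m} (hσ : IsSymplecticGerm m σ) :
    ∃ A : (Fin m → ℝ) → (Fin m → ℝ) →L[ℝ] (Fin m → ℝ) →L[ℝ] ℝ, IsClosedGerm A ∧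
      Function.Injective (A 0) ∧ ∀ᶠ x in 𝓝 0, ∀ u v, A x u v = σ x u v := by
  obtain ⟨hform, hclosed, hnondeg⟩ := hσ
  obtain ⟨A, hA, hskew, hAσ⟩ := hform.exists_contDiff
  refine ⟨A, ⟨hA, hskew, hclosed.eventually_closedAt hA hAσ⟩, ?_, hAσ⟩
  refine (injective_iff_map_eq_zero _).2 fun u hu => hnondeg.self_of_nhds u fun v => ?_
  rw [← hAσ.self_of_nhds u v, hu, zero_apply]

theorem SameAR2.exists_sub_eq_add_extDeriv₁ {σ₁ σ₂ : Form2 m} {f : ℝ → Fin m → ℝ}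
    (h : SameAR2 m σ₁ σ₂ f) (hf : Tendsto f (𝓝 0) (𝓝 0))
    {A₁ A₂ : (Fin m → ℝ) → (Fin m → ℝ) →L[ℝ] (Fin m → ℝ) →L[ℝ] ℝ}
    (hA₁ : ∀ᶠ x in 𝓝 0, ∀ u v, A₁ x u v = σ₁ x u v)
    (hA₂ : ∀ᶠ x in 𝓝 0, ∀ u v, A₂ x u v = σ₂ x u v) :
    ∃ (α : (Fin m → ℝ) → (Fin m → ℝ) →L[ℝ] (Fin m → ℝ) →L[ℝ] ℝ)
      (β : (Fin m → ℝ) → (Fin m → ℝ) →L[ℝ] ℝ), ContDiff ℝ ∞ α ∧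
      (∀ x u v, α x u v = -α x v u) ∧ ContDiff ℝ ∞ β ∧
      (∀ᶠ x in 𝓝 0, A₁ x - A₂ x = α x + extDeriv₁ β x) ∧
      (∀ᶠ t in 𝓝 0, α (f t) = 0) ∧ ∀ᶠ t in 𝓝 0, β (f t) = 0 := by
  obtain ⟨a, b, ha, hb, haf, hbf, hab⟩ := h
  obtain ⟨α, hα, hα_skew, hαa⟩ := ha.exists_contDiff
  obtain ⟨β, hβ, hβb⟩ := hb.exists_contDiff
  refine ⟨α, β, hα, hα_skew, hβ, ?_, ?_, ?_⟩
  · filter_upwards [hA₁, hA₂, hαa, eventually_extDeriv₁_eq_extD1 hβ hβb, hab]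
      with x h₁ h₂ hα hβ h
    ext1 u
    ext1 v
    rw [sub_apply, sub_apply, add_apply, add_apply, h₁, h₂, hα, hβ, h]
  · filter_upwards [haf, hf.eventually hαa] with t ht hαt
    ext1 u
    ext1 v
    rw [hαt, ht, zero_apply, zero_apply]
  · filter_upwards [hbf, hf.eventually hβb] with t ht hβt
    ext1 u
    rw [hβt, ht, zero_apply]

theorem sameAR2_of_eventually_eq {σ₁ σ₂ : Form2 m}
    (h : ∀ᶠ x in 𝓝 0, ∀ u v, σ₁ x u v = σ₂ x u v) (f : ℝ → Fin m → ℝ) :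
    SameAR2 m σ₁ σ₂ f := by
  have hsmooth : ∃ U ∈ 𝓝 (0 : Fin m → ℝ), ContDiffOn ℝ ∞ (fun _ => (0 : ℝ)) U :=
    ⟨Set.univ, univ_mem, contDiffOn_const⟩
  refine ⟨fun _ _ _ => 0, fun _ _ => 0, ⟨by simp, by simp, fun _ _ => hsmooth⟩,
    ⟨by simp, fun _ => hsmooth⟩, .of_forall fun _ _ _ => rfl, .of_forall fun _ _ => rfl, ?_⟩
  filter_upwards [h] with x hx u v
  simp [hx, extD1]

end SmoothRepresentatives

section DiffeomorphismGerms

variable {m : ℕ}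

theorem IsCurveGerm.tendsto {f : ℝ → Fin m → ℝ} (hf : IsCurveGerm m f) :
    Tendsto f (𝓝 0) (𝓝 0) := by
  simpa only [hf.1] using (smoothNear_iff_contDiffOn.2 hf.2).continuousAt.tendsto

theorem IsDiffeoGerm1.map_nhds {φ : ℝ → ℝ} (hφ : IsDiffeoGerm1 φ) : map φ (𝓝 0) = 𝓝 0 := by
  obtain ⟨h0, hs, hd⟩ := hφ
  have hderiv : HasStrictDerivAt φ (deriv φ 0) 0 :=
    (smoothNear_iff_contDiffOn.2 hs).contDiffAt.hasStrictDerivAt (by simp)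
  simpa only [h0] using hderiv.map_nhds_eq hd

namespace IsDiffeoGerm

theorem smoothNear {Φ : (Fin m → ℝ) → Fin m → ℝ} (hΦ : IsDiffeoGerm m Φ) : SmoothNear Φ 0 :=
  smoothNear_iff_contDiffOn.2 hΦ.2.1

theorem tendsto {Φ : (Fin m → ℝ) → Fin m → ℝ} (hΦ : IsDiffeoGerm m Φ) :
    Tendsto Φ (𝓝 0) (𝓝 0) := by
  simpa only [hΦ.1] using hΦ.smoothNear.continuousAt.tendsto

theorem comp {Φ₁ Φ₂ : (Fin m → ℝ) → Fin m → ℝ} (h₁ : IsDiffeoGerm m Φ₁)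
    (h₂ : IsDiffeoGerm m Φ₂) : IsDiffeoGerm m (Φ₁ ∘ Φ₂) := by
  have hsmooth : SmoothNear (Φ₁ ∘ Φ₂) 0 := .comp (by rw [h₂.1]; exact h₁.smoothNear) h₂.smoothNear
  obtain ⟨h₁0, -, D₁, hD₁⟩ := h₁
  obtain ⟨h₂0, -, D₂, hD₂⟩ := h₂
  exact ⟨by simp [h₁0, h₂0], smoothNear_iff_contDiffOn.1 hsmooth, D₂.trans D₁,
    (show HasFDerivAt Φ₁ (D₁ : (Fin m → ℝ) →L[ℝ] Fin m → ℝ) (Φ₂ 0) by rwa [h₂0]).comp 0 hD₂⟩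

theorem exists_contDiff {Φ : (Fin m → ℝ) → Fin m → ℝ} (hΦ : IsDiffeoGerm m Φ) :
    ∃ P : (Fin m → ℝ) → Fin m → ℝ, ContDiff ℝ ∞ P ∧ P =ᶠ[𝓝 0] Φ ∧ IsDiffeoGerm m P := by
  obtain ⟨P, hP, hPΦ⟩ := hΦ.smoothNear.exists_contDiff
  obtain ⟨h0, -, D, hD⟩ := hΦ
  exact ⟨P, hP, hPΦ, hPΦ.self_of_nhds.trans h0, smoothNear_iff_contDiffOn.1 (.of_contDiff hP 0), D,
    hD.congr_of_eventuallyEq hPΦ⟩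

theorem exists_contDiff_inverse {Φ : (Fin m → ℝ) → Fin m → ℝ} (hΦ : IsDiffeoGerm m Φ) :
    ∃ Q : (Fin m → ℝ) → Fin m → ℝ, ContDiff ℝ ∞ Q ∧ IsDiffeoGerm m Q ∧
      (∀ᶠ x in 𝓝 0, Q (Φ x) = x) ∧ ∀ᶠ y in 𝓝 0, Φ (Q y) = y := by
  obtain ⟨P, hP, hPΦ, hPdiffeo⟩ := hΦ.exists_contDiff
  have hPtendsto := hPdiffeo.tendsto
  obtain ⟨hP0, -, D, hD⟩ := hPdiffeo
  obtain ⟨g, hg, hg0, hgP, hPg⟩ := exists_smoothNear_inverse hP hD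
  rw [hP0] at hg hg0 hPg
  obtain ⟨Q, hQ, hQg⟩ := hg.exists_contDiff
  have hQ0 : Q 0 = 0 := hQg.self_of_nhds.trans hg0
  have hQtendsto : Tendsto Q (𝓝 0) (𝓝 0) := by simpa only [hQ0] using hQ.continuous.tendsto 0
  have hPQ : ∀ᶠ y in 𝓝 0, P (Q y) = y := by
    filter_upwards [hPg, hQg] with y hy hQy
    rw [hQy, hy]
  have hQD : HasFDerivAt Q (D.symm : (Fin m → ℝ) →L[ℝ] Fin m → ℝ) 0 :=
    HasFDerivAt.of_local_left_inverse hQ.continuous.continuousAt (by rwa [hQ0]) hPQ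
  refine ⟨Q, hQ, ⟨hQ0, smoothNear_iff_contDiffOn.1 (.of_contDiff hQ 0), D.symm, hQD⟩, ?_, ?_⟩
  · filter_upwards [hgP, hPΦ, hPtendsto.eventually hQg] with x hx hPx hQx
    rw [← hPx, hQx, hx]
  · filter_upwards [hPQ, hQtendsto.eventually hPΦ] with y hy hΦy
    rw [← hΦy, hy]

theorem injective_pullback₂ {Φ : (Fin m → ℝ) → Fin m → ℝ} (hΦ : IsDiffeoGerm m Φ)
    {A : (Fin m → ℝ) → (Fin m → ℝ) →L[ℝ] (Fin m → ℝ) →L[ℝ] ℝ}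
    (hA : Function.Injective (A 0)) : Function.Injective (pullback₂ Φ A 0) := by
  obtain ⟨h0, -, D, hD⟩ := hΦ
  refine (injective_iff_map_eq_zero _).2 fun u hu => ?_
  have hDu : A 0 (D u) = 0 := by
    ext1 v
    simpa [pullback₂_apply, h0, hD.fderiv] using DFunLike.congr_fun hu (D.symm v)
  simpa using (injective_iff_map_eq_zero _).1 hA _ hDu

end IsDiffeoGerm

theorem isDiffeoGerm_of_pullback₂_eq {Ψ : (Fin m → ℝ) → Fin m → ℝ} (hΨ0 : Ψ 0 = 0)
    (hΨ : SmoothNear Ψ 0) {A₀ A₁ : (Fin m → ℝ) → (Fin m → ℝ) →L[ℝ] (Fin m → ℝ) →L[ℝ] ℝ}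
    (hA : pullback₂ Ψ A₁ 0 = A₀ 0) (hA₀ : Function.Injective (A₀ 0)) : IsDiffeoGerm m Ψ := by
  have hinj : Function.Injective (fderiv ℝ Ψ 0).toLinearMap :=
    (injective_iff_map_eq_zero _).2 fun u hu => (injective_iff_map_eq_zero _).1 hA₀ u <| by
      ext1 v
      simp [← hA, show fderiv ℝ Ψ 0 u = 0 from hu]
  exact ⟨hΨ0, smoothNear_iff_contDiffOn.1 hΨ,
    (LinearEquiv.ofInjectiveEndo _ hinj).toContinuousLinearEquiv, hΨ.differentiableAt.hasFDerivAt⟩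

end DiffeomorphismGerms

section QuasiHomogeneousCurves

variable {m : ℕ}

theorem monomialCurve_pi_single {k : ℕ} (hk : k ≤ m) (μ : Fin k → ℕ) (t : ℝ) :
    monomialCurve μ (fun i => Pi.single (Fin.castLE hk i) (1 : ℝ)) t =
      fun i : Fin m => if h : (i : ℕ) < k then t ^ μ ⟨i, h⟩ else 0 := by
  ext i
  simp only [monomialCurve, Finset.sum_apply, Pi.smul_apply, smul_eq_mul]
  split_ifs with h
  · rw [Finset.sum_eq_single ⟨i, h⟩ (fun j _ hj => ?_) (by simp)]
    · simp
    · rw [Pi.single_eq_of_ne (fun hij => hj (Fin.ext (by simp [hij]))), mul_zero]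
  · refine Finset.sum_eq_zero fun j _ => ?_
    rw [Pi.single_eq_of_ne (fun hij => h (by simp [hij])), mul_zero]

theorem IsQuasiHomogeneousCurve.exists_eq_comp_monomialCurve {f : ℝ → Fin m → ℝ}
    (hf : Tendsto f (𝓝 0) (𝓝 0)) (hq : IsQuasiHomogeneousCurve m f) :
    ∃ (k : ℕ) (μ : Fin k → ℕ) (e : Fin k → Fin m → ℝ) (φ : ℝ → ℝ) (Q : (Fin m → ℝ) → Fin m → ℝ),
      (∀ i, 0 < μ i) ∧ LinIndepNonneg μ ∧ LinearIndependent ℝ e ∧ IsDiffeoGerm1 φ ∧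
      ContDiff ℝ ∞ Q ∧ IsDiffeoGerm m Q ∧ ∀ᶠ t in 𝓝 0, f t = Q (monomialCurve μ e (φ t)) := by
  obtain ⟨k, -, hk, μ, -, hμ, hind, φ, Φ, hφ, hΦ, hΦf⟩ := hq
  obtain ⟨Q, hQ, hQdiffeo, hQΦ, -⟩ := hΦ.exists_contDiff_inverse
  refine ⟨k, μ, fun i => Pi.single (Fin.castLE hk i) 1, φ, Q, hμ, hind,
    (Pi.linearIndependent_single_one (Fin m) ℝ).comp _ (Fin.castLE_injective hk), hφ, hQ, hQdiffeo,
    ?_⟩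
  filter_upwards [hΦf, hf.eventually hQΦ] with t ht hQt
  rw [monomialCurve_pi_single hk, ← ht, hQt]

theorem exists_sub_eq_extDeriv₁_pullback₂_of_comp_monomialCurve {k : ℕ} {μ : Fin k → ℕ}
    {e : Fin k → Fin m → ℝ} (hμ : ∀ i, 0 < μ i) (he : LinearIndependent ℝ e)
    {Q : (Fin m → ℝ) → Fin m → ℝ} (hQ : ContDiff ℝ ∞ Q) (hQ0 : Q 0 = 0)
    {A₀ A₁ α : (Fin m → ℝ) → (Fin m → ℝ) →L[ℝ] (Fin m → ℝ) →L[ℝ] ℝ}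
    {β : (Fin m → ℝ) → (Fin m → ℝ) →L[ℝ] ℝ} (hA₀ : IsClosedGerm A₀) (hA₁ : IsClosedGerm A₁)
    (hα : ContDiff ℝ ∞ α) (hα_skew : ∀ x u v, α x u v = -α x v u) (hβ : ContDiff ℝ ∞ β)
    (hsub : ∀ᶠ x in 𝓝 0, A₁ x - A₀ x = α x + extDeriv₁ β x)
    (hαQ : ∀ᶠ t in 𝓝 0, α (Q (monomialCurve μ e t)) = 0)
    (hβQ : ∀ᶠ t in 𝓝 0, β (Q (monomialCurve μ e t)) = 0) :
    ∃ η : (Fin m → ℝ) → (Fin m → ℝ) →L[ℝ] ℝ, ContDiff ℝ ∞ η ∧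
      (∀ᶠ x in 𝓝 0, pullback₂ Q A₁ x - pullback₂ Q A₀ x = extDeriv₁ η x) ∧
      ∀ᶠ t in 𝓝 0, η (monomialCurve μ e t) = 0 := by
  have hQtendsto : Tendsto Q (𝓝 0) (𝓝 0) := by simpa only [hQ0] using hQ.continuous.tendsto 0
  refine exists_sub_eq_extDeriv₁_of_monomialCurve (α := pullback₂ Q α) (β := pullback₁ Q β) hμ he
    (isClosedGerm_pullback₂ hQ hQ0 hA₀) (isClosedGerm_pullback₂ hQ hQ0 hA₁)
    (contDiff_pullback₂ hQ hα) (fun x u v => hα_skew _ _ _) (contDiff_pullback₁ hQ hβ) ?_ ?_ ?_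
  · filter_upwards [hQtendsto.eventually hsub] with x hx
    rw [extDeriv₁_pullback₁ hQ hβ]
    ext1 u
    ext1 v
    exact congrArg (fun B => B (fderiv ℝ Q x u) (fderiv ℝ Q x v)) hx
  · filter_upwards [hαQ] with t ht
    ext1 u
    ext1 v
    simp [ht]
  · filter_upwards [hβQ] with t ht
    ext1 u
    simp [ht]

theorem eventually_pullback₂_conj_eq {A₀ A₁ : (Fin m → ℝ) → (Fin m → ℝ) →L[ℝ] (Fin m → ℝ) →L[ℝ] ℝ}
    {P Q Ψ : (Fin m → ℝ) → Fin m → ℝ} (hP : IsDiffeoGerm m P) (hQ : IsDiffeoGerm m Q)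
    (hQP : ∀ᶠ x in 𝓝 0, Q (P x) = x) (hΨ : IsDiffeoGerm m Ψ)
    (hΨA : ∀ᶠ x in 𝓝 0, pullback₂ Ψ (pullback₂ Q A₁) x = pullback₂ Q A₀ x) :
    ∀ᶠ x in 𝓝 0, pullback₂ (Q ∘ Ψ ∘ P) A₁ x = A₀ x := by
  have hdiff : ∀ {Φ}, IsDiffeoGerm m Φ → ∀ᶠ x in 𝓝 0, DifferentiableAt ℝ Φ x := fun hΦ =>
    hΦ.smoothNear.eventually.mono fun _ hx => hx.differentiableAt
  have hΨP := hΨ.comp hP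
  filter_upwards [hP.tendsto.eventually hΨA, hQP.eventually_nhds, hdiff hP, hdiff hΨP,
    hP.tendsto.eventually (hdiff hQ), hP.tendsto.eventually (hdiff hΨ),
    hΨP.tendsto.eventually (hdiff hQ)] with x hx hQPx hPx hΨPx hQ₀ hΨx hQ₁
  calc pullback₂ (Q ∘ Ψ ∘ P) A₁ x
      = pullback₂ P (pullback₂ Ψ (pullback₂ Q A₁)) x := by
        rw [pullback₂_comp A₁ hQ₁ hΨPx, pullback₂_comp _ hΨx hPx]
    _ = pullback₂ P (pullback₂ Q A₀) x :=
        congrArg (fun B => B.bilinearComp (fderiv ℝ P x) (fderiv ℝ P x)) hx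
    _ = pullback₂ (Q ∘ P) A₀ x := (pullback₂_comp A₀ hQ₀ hPx).symm
    _ = A₀ x := pullback₂_of_eventuallyEq_id hQPx A₀

theorem exists_isDiffeoGerm_pullback₂_eq_of_isQuasiHomogeneousCurve {f : ℝ → Fin m → ℝ}
    (hf : Tendsto f (𝓝 0) (𝓝 0)) (hq : IsQuasiHomogeneousCurve m f)
    {A₀ A₁ α : (Fin m → ℝ) → (Fin m → ℝ) →L[ℝ] (Fin m → ℝ) →L[ℝ] ℝ}
    {β : (Fin m → ℝ) → (Fin m → ℝ) →L[ℝ] ℝ} (hA₀ : IsClosedGerm A₀) (hA₁ : IsClosedGerm A₁)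
    (hinj₀ : Function.Injective (A₀ 0)) (hinj₁ : Function.Injective (A₁ 0))
    (hα : ContDiff ℝ ∞ α) (hα_skew : ∀ x u v, α x u v = -α x v u) (hβ : ContDiff ℝ ∞ β)
    (hsub : ∀ᶠ x in 𝓝 0, A₁ x - A₀ x = α x + extDeriv₁ β x)
    (hαf : ∀ᶠ t in 𝓝 0, α (f t) = 0) (hβf : ∀ᶠ t in 𝓝 0, β (f t) = 0) :
    ∃ Ψ, IsDiffeoGerm m Ψ ∧ (∀ᶠ t in 𝓝 0, Ψ (f t) = f t) ∧
      ∀ᶠ x in 𝓝 0, pullback₂ Ψ A₁ x = A₀ x := by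
  obtain ⟨k, μ, e, φ, Q, hμ, hind, he, hφ, hQ, hQdiffeo, hfQ⟩ :=
    hq.exists_eq_comp_monomialCurve hf
  obtain ⟨P, -, hP, hPQ, hQP⟩ := hQdiffeo.exists_contDiff_inverse
  have hcurve : ∀ p : (Fin m → ℝ) → Prop, (∀ᶠ t in 𝓝 0, p (f t)) →
      ∀ᶠ s in 𝓝 0, p (Q (monomialCurve μ e s)) := fun p hp => by
    rw [← hφ.map_nhds, eventually_map]
    filter_upwards [hp, hfQ] with t ht hft
    rwa [← hft]
  obtain ⟨η, hη, hηsub, hηγ⟩ := exists_sub_eq_extDeriv₁_pullback₂_of_comp_monomialCurve hμ he hQ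
    hQdiffeo.1 hA₀ hA₁ hα hα_skew hβ hsub (hcurve (α · = 0) hαf) (hcurve (β · = 0) hβf)
  obtain ⟨Ψ, hΨ, hΨγ, hΨA⟩ := exists_pullback₂_eq_of_monomialCurve hμ hind
    (isClosedGerm_pullback₂ hQ hQdiffeo.1 hA₀) (isClosedGerm_pullback₂ hQ hQdiffeo.1 hA₁)
    (hQdiffeo.injective_pullback₂ hinj₀) (hQdiffeo.injective_pullback₂ hinj₁) hη hηsub hηγ
  have hΨ0 : Ψ 0 = 0 := by simpa only [monomialCurve_zero hμ] using hΨγ.self_of_nhds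
  have hΨdiffeo : IsDiffeoGerm m Ψ := isDiffeoGerm_of_pullback₂_eq hΨ0 hΨ hΨA.self_of_nhds
    (hQdiffeo.injective_pullback₂ hinj₀)
  refine ⟨Q ∘ Ψ ∘ P, hQdiffeo.comp (hΨdiffeo.comp hP), ?_,
    eventually_pullback₂_conj_eq hP hQdiffeo hQP hΨdiffeo hΨA⟩
  have hγ : Tendsto (monomialCurve μ e) (𝓝 0) (𝓝 0) := by
    simpa only [monomialCurve_zero hμ] using (contDiff_monomialCurve μ e).continuous.tendsto 0
  have hφtendsto : Tendsto φ (𝓝 0) (𝓝 0) := hφ.map_nhds.le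
  filter_upwards [hfQ, hφtendsto.eventually (hγ.eventually hPQ), hφtendsto.eventually hΨγ]
    with t ht hPt hΨt
  rw [Function.comp_apply, Function.comp_apply, ht, hPt, hΨt]

theorem exists_isDiffeoGerm_pull2_eq_of_sameAR2 {σ : Form2 m} (hσ : IsSymplecticGerm m σ)
    {f : ℝ → Fin m → ℝ} (hf : IsCurveGerm m f) (hq : IsQuasiHomogeneousCurve m f)
    {Θ : (Fin m → ℝ) → Fin m → ℝ} (hΘ : IsDiffeoGerm m Θ)
    (hAR : SameAR2 m (pull2 m Θ σ) σ f) :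
    ∃ Φ, IsDiffeoGerm m Φ ∧ (∀ᶠ x in 𝓝 0, ∀ u v, pull2 m Φ σ x u v = σ x u v) ∧
      ∀ᶠ t in 𝓝 0, Φ (f t) = Θ (f t) := by
  obtain ⟨A, hA, hinj, hAσ⟩ := hσ.exists_isClosedGerm
  obtain ⟨T, hT, hTΘ, hTdiffeo⟩ := hΘ.exists_contDiff
  have hpull : ∀ᶠ x in 𝓝 0, ∀ u v, pullback₂ T A x u v = pull2 m Θ σ x u v := by
    filter_upwards [hTΘ.eventually_nhds, hTdiffeo.tendsto.eventually hAσ] with x hx hAx u v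
    rw [pullback₂_apply, hAx, EventuallyEq.fderiv_eq hx, hx.self_of_nhds, pull2]
  obtain ⟨α, β, hα, hα_skew, hβ, hsub, hαf, hβf⟩ :=
    hAR.exists_sub_eq_add_extDeriv₁ hf.tendsto hpull hAσ
  obtain ⟨Ψ, hΨ, hΨf, hΨA⟩ := exists_isDiffeoGerm_pullback₂_eq_of_isQuasiHomogeneousCurve
    hf.tendsto hq hA (isClosedGerm_pullback₂ hT hTdiffeo.1 hA) hinj
    (hTdiffeo.injective_pullback₂ hinj) hα hα_skew hβ hsub hαf hβf
  have hTΨ := hTdiffeo.comp hΨ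
  refine ⟨T ∘ Ψ, hTΨ, ?_, ?_⟩
  · filter_upwards [hΨA, hTΨ.tendsto.eventually hAσ, hΨ.smoothNear.eventually, hAσ]
      with x hx hAx hΨx hσx u v
    have hT' := hT.differentiable (by simp) (Ψ x)
    rw [pull2, ← hAx, ← pullback₂_apply, pullback₂_comp A hT' hΨx.differentiableAt, hx, hσx]
  · filter_upwards [hΨf, hf.tendsto.eventually hTΘ] with t ht hTt
    rw [Function.comp_apply, ht, hTt]

end QuasiHomogeneousCurves

end

/-- Two quasi-homogeneous curve-germs are symplectomorphic in `(ℝ^{2n},ω)` if and only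
if the algebraic restrictions `[ω]_{f₁}` and `[ω]_{f₂}` are diffeomorphic. -/
theorem symplectomorphic_iff_algRestrictions_diffeomorphic
    (n : ℕ) (ω : Form2 (2*n)) (hω : IsSymplecticGerm (2*n) ω)
    (f₁ f₂ : ℝ → (Fin (2*n) → ℝ))
    (hf₁ : IsCurveGerm (2*n) f₁) (hf₂ : IsCurveGerm (2*n) f₂)
    (hq₁ : IsQuasiHomogeneousCurve (2*n) f₁) (hq₂ : IsQuasiHomogeneousCurve (2*n) f₂) :
    (∃ (φ : ℝ → ℝ) (Φ : (Fin (2*n) → ℝ) → (Fin (2*n) → ℝ)),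
        IsDiffeoGerm1 φ ∧ IsDiffeoGerm (2*n) Φ ∧
        (∀ᶠ x in 𝓝 (0 : Fin (2*n) → ℝ), ∀ u v, pull2 (2*n) Φ ω x u v = ω x u v) ∧
        ∀ᶠ t in 𝓝 (0 : ℝ), Φ (f₁ t) = f₂ (φ t)) ↔
    (∃ (Θ : (Fin (2*n) → ℝ) → (Fin (2*n) → ℝ)) (ψ : ℝ → ℝ),
        IsDiffeoGerm (2*n) Θ ∧ IsDiffeoGerm1 ψ ∧
        (∀ᶠ t in 𝓝 (0 : ℝ), Θ (f₁ t) = f₂ (ψ t)) ∧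
        SameAR2 (2*n) (pull2 (2*n) Θ ω) ω f₁) := by
  constructor
  · rintro ⟨φ, Φ, hφ, hΦ, hΦω, hΦf⟩
    exact ⟨Φ, φ, hΦ, hφ, hΦf, sameAR2_of_eventually_eq hΦω f₁⟩
  · rintro ⟨Θ, ψ, hΘ, hψ, hΘf, hAR⟩
    obtain ⟨Φ, hΦ, hΦω, hΦΘ⟩ := exists_isDiffeoGerm_pull2_eq_of_sameAR2 hω hf₁ hq₁ hΘ hAR
    refine ⟨ψ, Φ, hψ, hΦ, hΦω, ?_⟩
    filter_upwards [hΦΘ, hΘf] with t hΦt hΘt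
    rw [hΦt, hΘt]
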